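/- arXiv:1103.1980 — 2 statements merged into one kernel-verified Lean document; each statement's English description precedes it below -/
import Mathlib

section
/- Sperner's lemma in dimension 2: any Sperner labeling of a triangulation of a triangle admits an odd number of fully labeled small triangles; in particular at least one fully labeled triangle exists. -/
open scoped Classical

/-- A triangulation of the standard 2-dimensional simplex (a triangle):
a finite vertex set with geometric positions in the simplex, and a finite
family of small triangles (each given by its 3 affinely independent vertices)
whose convex hulls cover the triangle and intersect pairwise in the convex
hull of their common vertices. -/
structure Triangulation2 where
  V : Type
  [fintypeV : Fintype V]
  [decV : DecidableEq V]
  pos : V → (Fin 3 → ℝ)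
  pos_mem : ∀ v, pos v ∈ stdSimplex ℝ (Fin 3)
  triangles : Finset (Finset V)
  card_triangle : ∀ s ∈ triangles, s.card = 3
  indep : ∀ s ∈ triangles, AffineIndependent ℝ (fun v : s => pos v)
  covers : (⋃ s ∈ triangles, convexHull ℝ (pos '' (s : Set V))) = stdSimplex ℝ (Fin 3)
  inter : ∀ s ∈ triangles, ∀ t ∈ triangles,
    convexHull ℝ (pos '' (s : Set V)) ∩ convexHull ℝ (pos '' (t : Set V))
      = convexHull ℝ (pos '' ((s ∩ t : Finset V) : Set V))

/-!
Fix a label, call a facet carrying exactly the other labels a *door*, and count the pairs of a cell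
and a door of it in two ways. A fully labeled cell has one door, any other cell none or two; so the
number of fully labeled cells has the parity of the number of doors lying in one cell only. These
are the doors on the boundary, and they are the fully labeled cells of the triangulation induced on
a facet of the simplex, so that induction over the coordinate faces applies.

The geometric input is that a door lies in one cell or two. It is cleanest in the orthant, where
the cells become the simplicial cones over them. The door `F` spans a wall `φ = 0` of a coordinate
subspace. Pushing an interior point of `F` off the wall in a direction `d` with `φ d > 0` lands in
the cone over some `F ∪ {a}` with `φ a > 0`; for two such apices `a` and `b` the interiors of the
cones over `F ∪ {a}` and `F ∪ {b}` would meet, so `a = b`. Inside the simplex both sides of the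
wall can be reached, on its boundary just one.
-/

namespace Sperner

open Filter Finset Module Topology

section Cones

variable {V E : Type*} [AddCommGroup E] [Module ℝ E] {pos : V → E} {s t : Finset V}

/-- The nonnegative coefficient families supported on the vertices of `t`. -/
def nonnegWeights (t : Finset V) : Set (V →₀ ℝ) :=
  {w | 0 ≤ w ∧ w ∈ Finsupp.supported ℝ ℝ (t : Set V)}

/-- The cone with apex `0` spanned by the positions of the vertices of `t`. -/
def vertexCone (pos : V → E) (t : Finset V) : Set E :=
  Finsupp.linearCombination ℝ pos '' nonnegWeights t

theorem add_mem_nonnegWeights {w w' : V →₀ ℝ} (hw : w ∈ nonnegWeights t)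
    (hw' : w' ∈ nonnegWeights t) : w + w' ∈ nonnegWeights t :=
  ⟨add_nonneg hw.1 hw'.1, add_mem hw.2 hw'.2⟩

theorem smul_mem_nonnegWeights {w : V →₀ ℝ} {c : ℝ} (hc : 0 ≤ c) (hw : w ∈ nonnegWeights t) :
    c • w ∈ nonnegWeights t :=
  ⟨smul_nonneg hc hw.1, Submodule.smul_mem _ c hw.2⟩

theorem single_mem_nonnegWeights {v : V} {c : ℝ} (hv : v ∈ t) (hc : 0 ≤ c) :
    Finsupp.single v c ∈ nonnegWeights t :=
  ⟨Finsupp.single_nonneg.2 hc, Finsupp.single_mem_supported ℝ c hv⟩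

theorem nonnegWeights_mono (hst : s ⊆ t) : nonnegWeights s ⊆ nonnegWeights t :=
  fun _ hw => ⟨hw.1, Finsupp.supported_mono (coe_subset.2 hst) hw.2⟩

theorem posPart_mem_nonnegWeights {w : V →₀ ℝ} (hw : w ∈ Finsupp.supported ℝ ℝ (t : Set V)) :
    w⁺ ∈ nonnegWeights t := by
  refine ⟨posPart_nonneg w, (Finsupp.mem_supported' ℝ _).2 fun v hv => ?_⟩
  simp [posPart_def, (Finsupp.mem_supported' ℝ w).1 hw v hv]

theorem negPart_mem_nonnegWeights {w : V →₀ ℝ} (hw : w ∈ Finsupp.supported ℝ ℝ (t : Set V)) :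
    w⁻ ∈ nonnegWeights t :=
  posPart_neg w ▸ posPart_mem_nonnegWeights (neg_mem hw)

theorem smul_mem_vertexCone {x : E} {c : ℝ} (hc : 0 ≤ c) (hx : x ∈ vertexCone pos t) :
    c • x ∈ vertexCone pos t := by
  obtain ⟨w, hw, rfl⟩ := hx
  exact ⟨c • w, smul_mem_nonnegWeights hc hw, map_smul _ _ _⟩

theorem convexHull_subset_vertexCone : convexHull ℝ (pos '' t) ⊆ vertexCone pos t := by
  refine convexHull_min ?_ (Convex.linear_image ?_ _)
  · rintro _ ⟨v, hv, rfl⟩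
    exact ⟨.single v 1, single_mem_nonnegWeights hv zero_le_one, by simp⟩
  · exact fun w hw w' hw' a b ha hb _ =>
      add_mem_nonnegWeights (smul_mem_nonnegWeights ha hw) (smul_mem_nonnegWeights hb hw')

/-- Because the vertices lie on the hyperplane `σ = 1`, the hull is the slice of the cone
there. -/
theorem inv_smul_mem_convexHull {σ : E →ₗ[ℝ] ℝ} (hσ : ∀ v ∈ t, σ (pos v) = 1) {x : E}
    (hx : x ∈ vertexCone pos t) (hσx : 0 < σ x) : (σ x)⁻¹ • x ∈ convexHull ℝ (pos '' t) := by
  obtain ⟨w, hw, rfl⟩ := hx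
  have hmass : σ (Finsupp.linearCombination ℝ pos w) = ∑ v ∈ t, w v := by
    simp +contextual [Finsupp.linearCombination_apply_of_mem_supported ℝ hw.2, hσ]
  rw [hmass] at hσx ⊢
  rw [Finsupp.linearCombination_apply_of_mem_supported ℝ hw.2]
  exact t.centerMass_mem_convexHull (fun v _ => hw.1 v) hσx fun v hv => ⟨v, hv, rfl⟩

theorem eq_zero_of_mem_nonnegWeights {σ : E →ₗ[ℝ] ℝ} (hσ : ∀ v ∈ t, σ (pos v) = 1)
    {w : V →₀ ℝ} (hw : w ∈ nonnegWeights t)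
    (hσw : σ (Finsupp.linearCombination ℝ pos w) ≤ 0) : w = 0 := by
  have hmass : ∑ v ∈ t, w v ≤ 0 := by
    simpa +contextual [Finsupp.linearCombination_apply_of_mem_supported ℝ hw.2, hσ] using hσw
  ext v
  by_cases hv : v ∈ t
  · exact (sum_eq_zero_iff_of_nonneg fun v _ => hw.1 v).1
      (hmass.antisymm (sum_nonneg fun v _ => hw.1 v)) v hv
  · exact (Finsupp.mem_supported' ℝ w).1 hw.2 v hv

theorem vertexCone_inter_subset [DecidableEq V] {σ : E →ₗ[ℝ] ℝ}
    (hσs : ∀ v ∈ s, σ (pos v) = 1) (hσt : ∀ v ∈ t, σ (pos v) = 1)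
    (hst : convexHull ℝ (pos '' s) ∩ convexHull ℝ (pos '' t) ⊆ convexHull ℝ (pos '' (s ∩ t))) :
    vertexCone pos s ∩ vertexCone pos t ⊆ vertexCone pos (s ∩ t) := by
  rintro x ⟨hxs, hxt⟩
  rcases lt_or_ge 0 (σ x) with hσx | hσx
  · have hx : (σ x)⁻¹ • x ∈ vertexCone pos (s ∩ t) := by
      apply convexHull_subset_vertexCone
      rw [coe_inter]
      exact hst ⟨inv_smul_mem_convexHull hσs hxs hσx, inv_smul_mem_convexHull hσt hxt hσx⟩
    simpa [smul_smul, hσx.ne'] using smul_mem_vertexCone hσx.le hx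
  · obtain ⟨w, hw, rfl⟩ := hxs
    rw [eq_zero_of_mem_nonnegWeights hσs hw hσx]
    exact ⟨0, ⟨le_rfl, zero_mem _⟩, rfl⟩

theorem linearIndependent_of_affineIndependent {κ : Type*} {p : κ → E}
    (hp : AffineIndependent ℝ p) {σ : E →ₗ[ℝ] ℝ} (hσ : ∀ i, σ (p i) = 1) :
    LinearIndependent ℝ p := by
  refine linearIndependent_iff'.2 fun s g hg => affineIndependent_iff.1 hp s g ?_ hg
  simpa [hσ] using congrArg σ hg

theorem injOn_linearCombination {T : Finset (Finset V)} {σ : E →ₗ[ℝ] ℝ}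
    (hσ : ∀ t ∈ T, ∀ v ∈ t, σ (pos v) = 1)
    (hindep : ∀ t ∈ T, AffineIndependent ℝ fun v : t => pos v)
    (hinter : ∀ s ∈ T, ∀ t ∈ T, convexHull ℝ (pos '' s) ∩ convexHull ℝ (pos '' t) ⊆
      convexHull ℝ (pos '' (s ∩ t))) :
    Set.InjOn (Finsupp.linearCombination ℝ pos) (⋃ t ∈ T, nonnegWeights t) := by
  classical
  have hlin : ∀ t ∈ T, LinearIndepOn ℝ pos (t : Set V) := fun t ht =>
    linearIndependent_of_affineIndependent (hindep t ht) fun v => hσ t ht v v.2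
  intro w hw w' hw' heq
  obtain ⟨s, hs, hws⟩ := Set.mem_iUnion₂.1 hw
  obtain ⟨t, ht, hwt⟩ := Set.mem_iUnion₂.1 hw'
  obtain ⟨u, hu, hux⟩ := vertexCone_inter_subset (hσ s hs) (hσ t ht) (hinter s hs t ht)
    ⟨⟨w, hws, rfl⟩, ⟨w', hwt, heq.symm⟩⟩
  have hwu : w = u := linearIndepOn_iffₛ.1 (hlin s hs) w hws.2 u
    (nonnegWeights_mono inter_subset_left hu).2 hux.symm
  have hwu' : w' = u := linearIndepOn_iffₛ.1 (hlin t ht) w' hwt.2 u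
    (nonnegWeights_mono inter_subset_right hu).2 (heq.symm.trans hux.symm)
  rw [hwu, hwu']

theorem isClosed_vertexCone [TopologicalSpace E] [IsTopologicalAddGroup E]
    [ContinuousSMul ℝ E] [T2Space E] (ht : LinearIndepOn ℝ pos (t : Set V)) :
    IsClosed (vertexCone pos t) := by
  let L : (t → ℝ) →ₗ[ℝ] E := Fintype.linearCombination ℝ fun v => pos v
  have hL : LinearMap.ker L = ⊥ :=
    LinearMap.ker_eq_bot.2 (LinearIndependent.fintypeLinearCombination_injective ht)
  have hcone : vertexCone pos t = L '' Set.Ici 0 := by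
    ext x
    constructor
    · rintro ⟨w, hw, rfl⟩
      refine ⟨fun v => w v, fun v => hw.1 v, ?_⟩
      rw [Finsupp.linearCombination_apply_of_mem_supported ℝ hw.2, Fintype.linearCombination_apply]
      exact sum_coe_sort t fun v => w v • pos v
    · rintro ⟨f, hf, rfl⟩
      let w : V →₀ ℝ := ∑ v : t, .single (v : V) (f v)
      refine ⟨w, ⟨sum_nonneg fun v _ => Finsupp.single_nonneg.2 (hf v), sum_mem fun v _ =>
        Finsupp.single_mem_supported ℝ _ v.2⟩, ?_⟩
      simp [w, L, Fintype.linearCombination_apply]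
  rw [hcone]
  exact (L.isClosedEmbedding_of_injective hL).isClosedMap _ isClosed_Ici

end Cones

section Hyperplanes

variable {K E : Type*} [Field K] [AddCommGroup E] [Module K E]

theorem exists_inf_ker_eq {U W : Submodule K E} [FiniteDimensional K W] (hUW : U ≤ W)
    (hrank : finrank K W = finrank K U + 1) :
    ∃ φ : E →ₗ[K] K, W ⊓ LinearMap.ker φ = U ∧ ∃ d ∈ W, φ d = 1 := by
  obtain ⟨x, hxW, hxU⟩ := SetLike.exists_of_lt (hUW.lt_of_ne fun h => by subst h; omega)
  obtain ⟨φ, hφx, hUφ⟩ := Submodule.exists_le_ker_of_notMem hxU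
  refine ⟨φ, ?_, (φ x)⁻¹ • x, W.smul_mem _ hxW, by simp [hφx]⟩
  have hlt : W ⊓ LinearMap.ker φ < W :=
    inf_le_left.lt_of_ne fun h => hφx (inf_eq_left.1 h hxW)
  have hfinrank_lt := Submodule.finrank_lt_finrank_of_lt hlt
  have := Submodule.finiteDimensional_inf_left W (LinearMap.ker φ)
  exact (Submodule.eq_of_le_of_finrank_le (le_inf hUW hUφ) (by omega)).symm

theorem span_image_eq_of_card_eq {V : Type*} {pos : V → E} {s : Finset V} {W : Submodule K E}
    [FiniteDimensional K W] (hs : LinearIndepOn K pos (s : Set V)) (hsW : ∀ v ∈ s, pos v ∈ W)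
    (hcard : #s = finrank K W) : Submodule.span K (pos '' s) = W := by
  refine Submodule.eq_of_le_of_finrank_eq (Submodule.span_le.2 (by simpa [Set.subset_def])) ?_
  rw [Set.image_eq_range, finrank_span_eq_card hs, ← hcard]
  exact Fintype.card_coe s

end Hyperplanes

section Push

theorem tendsto_add_smul_nhdsGT {E : Type*} [AddCommGroup E] [Module ℝ E] [TopologicalSpace E]
    [ContinuousAdd E] [ContinuousSMul ℝ E] (p d : E) :
    Tendsto (fun ε : ℝ => p + ε • d) (𝓝[>] 0) (𝓝 p) := by
  have hcont : Continuous fun ε : ℝ => p + ε • d := by fun_prop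
  simpa using tendsto_nhdsWithin_of_tendsto_nhds (s := Set.Ioi 0) (hcont.tendsto 0)

theorem eventually_nonneg_add_smul {ι : Type*} [Finite ι] {p d : ι → ℝ} (hp : 0 ≤ p)
    (hd : ∀ i, 0 ≤ d i ∨ 0 < p i) : ∀ᶠ ε : ℝ in 𝓝[>] 0, 0 ≤ p + ε • d := by
  refine eventually_all.2 fun i => ?_
  rcases hd i with hdi | hpi
  · filter_upwards [self_mem_nhdsWithin] with ε hε
    exact add_nonneg (hp i) (mul_nonneg (le_of_lt hε) hdi)
  · exact ((tendsto_pi_nhds.1 (tendsto_add_smul_nhdsGT p d) i).eventually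
      (lt_mem_nhds hpi)).mono fun _ => le_of_lt

end Push

section Fan

variable {V ι : Type*} {pos : V → ι → ℝ} {T : Finset (Finset V)} {F s t : Finset V}

/-- The cones over the members of `T` subdivide the nonnegative orthant without overlap: every
point of the orthant is a nonnegative combination of the vertices of some member of `T`, with
coefficients that are unique across all members. For a triangulation of the standard simplex
these are the cones over its cells. -/
def IsOrthantFan (pos : V → ι → ℝ) (T : Finset (Finset V)) : Prop :=
  Set.BijOn (Finsupp.linearCombination ℝ pos) (⋃ t ∈ T, nonnegWeights t) (Set.Ici 0)

namespace IsOrthantFan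

theorem weights_eq (hT : IsOrthantFan pos T) (hs : s ∈ T) (ht : t ∈ T) {w w' : V →₀ ℝ}
    (hw : w ∈ nonnegWeights s) (hw' : w' ∈ nonnegWeights t)
    (h : Finsupp.linearCombination ℝ pos w = Finsupp.linearCombination ℝ pos w') : w = w' :=
  hT.injOn (Set.mem_biUnion hs hw) (Set.mem_biUnion ht hw') h

theorem pos_nonneg (hT : IsOrthantFan pos T) (ht : t ∈ T) {v : V} (hv : v ∈ t) : 0 ≤ pos v := by
  simpa using hT.mapsTo (Set.mem_biUnion ht (single_mem_nonnegWeights hv zero_le_one))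

theorem exists_mem_vertexCone (hT : IsOrthantFan pos T) {x : ι → ℝ} (hx : 0 ≤ x) :
    ∃ t ∈ T, x ∈ vertexCone pos t := by
  obtain ⟨w, hw, rfl⟩ := hT.surjOn hx
  obtain ⟨t, ht, hwt⟩ := Set.mem_iUnion₂.1 hw
  exact ⟨t, ht, w, hwt, rfl⟩

theorem linearIndepOn (hT : IsOrthantFan pos T) (ht : t ∈ T) :
    LinearIndepOn ℝ pos (t : Set V) := by
  refine linearIndepOn_iff.2 fun w hw h0 => ?_
  rw [← posPart_sub_negPart w] at h0 ⊢
  rw [map_sub] at h0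
  exact sub_eq_zero.2 (hT.weights_eq ht ht (posPart_mem_nonnegWeights hw)
    (negPart_mem_nonnegWeights hw) (sub_eq_zero.1 h0))

theorem exists_mem_vertexCone_add_smul [Finite ι] (hT : IsOrthantFan pos T) {p d : ι → ℝ}
    (hp : 0 ≤ p) (hd : ∀ i, 0 ≤ d i ∨ 0 < p i) :
    ∃ s ∈ T, p ∈ vertexCone pos s ∧ ∃ ε : ℝ, 0 < ε ∧ p + ε • d ∈ vertexCone pos s := by
  have hcovered : ∃ᶠ ε : ℝ in 𝓝[>] 0, ∃ s ∈ T, p + ε • d ∈ vertexCone pos s :=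
    ((eventually_nonneg_add_smul hp hd).mono fun _ => hT.exists_mem_vertexCone).frequently
  obtain ⟨s, hs, hfreq⟩ := (frequently_exists_finset T).1 hcovered
  refine ⟨s, hs, ?_, (hfreq.and_eventually self_mem_nhdsWithin).exists.imp fun ε h => h.symm⟩
  exact (isClosed_vertexCone (hT.linearIndepOn hs)).mem_of_frequently_of_tendsto hfreq
    (tendsto_add_smul_nhdsGT p d)

/-- Push the sum of the vertices of `F` slightly in the direction `d`: a cone containing both the
sum and the pushed point has `F` among its generators. -/
theorem exists_direction [Finite ι] (hT : IsOrthantFan pos T) (ht : t ∈ T) (hF : F ⊆ t)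
    {d : ι → ℝ} (hd : ∀ i, 0 ≤ d i ∨ ∃ v ∈ F, 0 < pos v i) :
    ∃ s ∈ T, F ⊆ s ∧ ∃ u ∈ Finsupp.supported ℝ ℝ (s : Set V),
      (∀ v ∉ F, 0 ≤ u v) ∧ Finsupp.linearCombination ℝ pos u = d := by
  let χ : V →₀ ℝ := Finsupp.indicator F fun _ _ => 1
  have hχF : ∀ v ∈ F, χ v = 1 := fun v hv => Finsupp.indicator_of_mem hv _
  have hχ : ∀ v ∉ F, χ v = 0 := fun v hv => Finsupp.indicator_of_notMem hv _
  have hχ_supp : χ ∈ Finsupp.supported ℝ ℝ (F : Set V) := (Finsupp.mem_supported' ℝ χ).2 hχ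
  have hχ_nonneg : 0 ≤ χ := fun v => by by_cases hv : v ∈ F <;> simp [hχF, hχ, hv]
  have hχt : χ ∈ nonnegWeights t :=
    ⟨hχ_nonneg, Finsupp.supported_mono (coe_subset.2 hF) hχ_supp⟩
  have hsum (i : ι) : Finsupp.linearCombination ℝ pos χ i = ∑ v ∈ F, pos v i := by
    simp +contextual [Finsupp.linearCombination_apply_of_mem_supported ℝ hχ_supp, hχF]
  have hpos_nonneg (i : ι) : ∀ v ∈ F, 0 ≤ pos v i := fun v hv => hT.pos_nonneg ht (hF hv) i
  obtain ⟨s, hs, ⟨w₀, hw₀, hw₀χ⟩, ε, hε, w, hw, hwε⟩ := hT.exists_mem_vertexCone_add_smul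
    (p := Finsupp.linearCombination ℝ pos χ) (d := d)
    (fun i => (hsum i).symm ▸ sum_nonneg (hpos_nonneg i))
    (fun i => (hd i).imp_right fun h => (hsum i).symm ▸ sum_pos' (hpos_nonneg i) h)
  have hχs : χ ∈ nonnegWeights s := hT.weights_eq hs ht hw₀ hχt hw₀χ ▸ hw₀
  have hFs : F ⊆ s := fun v hv => by
    by_contra hvs
    simpa [hχF v hv] using (Finsupp.mem_supported' ℝ χ).1 hχs.2 v hvs
  refine ⟨s, hs, hFs, ε⁻¹ • (w - χ), Submodule.smul_mem _ _ (sub_mem hw.2 hχs.2), ?_, ?_⟩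
  · intro v hv
    simpa [hχ v hv] using mul_nonneg (inv_nonneg.2 hε.le) (hw.1 v)
  · simp [hwε, smul_smul, hε.ne']

end IsOrthantFan

end Fan

section Faces

variable {V ι : Type*} [Finite ι] {pos : V → ι → ℝ} {T : Finset (Finset V)}
  {F s t : Finset V} {I J : Finset ι} {φ : (ι → ℝ) →ₗ[ℝ] ℝ}

theorem apply_eq_zero_of_mem (hφ : Pi.spanSubset ℝ (J : Set ι) ⊓ LinearMap.ker φ =
    Submodule.span ℝ (pos '' F)) {v : V} (hv : v ∈ F) : φ (pos v) = 0 :=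
  (hφ.ge (Submodule.subset_span ⟨v, hv, rfl⟩)).2

/-- Outside `J` the coordinates of the vertices in `F` vanish and the others contribute with
nonnegative weights, so no cancellation is possible there. -/
theorem IsOrthantFan.pos_mem_spanSubset (hT : IsOrthantFan pos T) (hs : s ∈ T)
    (hFJ : ∀ v ∈ F, pos v ∈ Pi.spanSubset ℝ (J : Set ι)) {u : V →₀ ℝ}
    (hu : u ∈ Finsupp.supported ℝ ℝ (s : Set V)) (hu_nonneg : ∀ v ∉ F, 0 ≤ u v)
    (huJ : Finsupp.linearCombination ℝ pos u ∈ Pi.spanSubset ℝ (J : Set ι)) {a : V}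
    (has : a ∈ s) (ha : 0 < u a) : pos a ∈ Pi.spanSubset ℝ (J : Set ι) := by
  rw [Pi.mem_spanSubset_iff] at huJ ⊢
  intro i hi
  have hterm : ∀ v ∈ s, 0 ≤ u v * pos v i := fun v hv => by
    by_cases hvF : v ∈ F
    · rw [Pi.mem_spanSubset_iff.1 (hFJ v hvF) i hi, mul_zero]
    · exact mul_nonneg (hu_nonneg v hvF) (hT.pos_nonneg hs hv i)
  have hsum : ∑ v ∈ s, u v * pos v i = 0 := by
    simpa [Finsupp.linearCombination_apply_of_mem_supported ℝ hu] using huJ i hi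
  exact (mul_eq_zero.1 ((sum_eq_zero_iff_of_nonneg hterm).1 hsum a has)).resolve_left ha.ne'

variable [DecidableEq V]

/-- The faces of members of `T` that triangulate the coordinate face indexed by `I`: they have
`#I` vertices, all of them lying in the coordinate subspace `ℝ^I`. -/
noncomputable def faces (pos : V → ι → ℝ) (T : Finset (Finset V)) (I : Finset ι) :
    Finset (Finset V) :=
  {s ∈ T.biUnion (powersetCard #I) | ∀ v ∈ s, pos v ∈ Pi.spanSubset ℝ (I : Set ι)}

theorem mem_faces : s ∈ faces pos T I ↔
    (∃ t ∈ T, s ⊆ t ∧ #s = #I) ∧ ∀ v ∈ s, pos v ∈ Pi.spanSubset ℝ (I : Set ι) := by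
  simp [faces]

theorem card_of_mem_faces (hs : s ∈ faces pos T I) : #s = #I := by
  obtain ⟨⟨_, _, _, hcard⟩, _⟩ := mem_faces.1 hs
  exact hcard

theorem exists_eq_insert_of_mem_faces (hs : s ∈ faces pos T J) (hFs : F ⊆ s)
    (hcard : #J = #F + 1) : ∃ a ∉ F, insert a F = s :=
  exists_eq_insert_iff.2 ⟨hFs, by rw [card_of_mem_faces hs, hcard]⟩

theorem finrank_spanSubset_coe (I : Finset ι) :
    finrank ℝ (Pi.spanSubset ℝ (I : Set ι)) = #I := by
  rw [Pi.dim_spanSubset, Set.ncard_coe_finset]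

namespace IsOrthantFan

theorem linearIndepOn_of_mem_faces (hT : IsOrthantFan pos T) (hs : s ∈ faces pos T I) :
    LinearIndepOn ℝ pos (s : Set V) := by
  obtain ⟨⟨t, ht, hst, _⟩, _⟩ := mem_faces.1 hs
  exact (hT.linearIndepOn ht).mono (coe_subset.2 hst)

theorem span_image_of_mem_faces (hT : IsOrthantFan pos T) (hs : s ∈ faces pos T I) :
    Submodule.span ℝ (pos '' s) = Pi.spanSubset ℝ (I : Set ι) :=
  span_image_eq_of_card_eq (hT.linearIndepOn_of_mem_faces hs) (mem_faces.1 hs).2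
    (by rw [finrank_spanSubset_coe, card_of_mem_faces hs])

theorem apply_ne_zero_of_insert_mem_faces (hT : IsOrthantFan pos T)
    (hφ : Pi.spanSubset ℝ (J : Set ι) ⊓ LinearMap.ker φ = Submodule.span ℝ (pos '' F)) {a : V}
    (haF : a ∉ F) (ha : insert a F ∈ faces pos T J) : φ (pos a) ≠ 0 := fun h0 => by
  have hindep := hT.linearIndepOn_of_mem_faces ha
  rw [coe_insert] at hindep
  exact hindep.notMem_span_of_insert haF
    (hφ.le ⟨(mem_faces.1 ha).2 a (mem_insert_self a F), h0⟩)

theorem exists_insert_mem_faces (hT : IsOrthantFan pos T) (ht : t ∈ T) (hFt : F ⊆ t)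
    (hcard : #J = #F + 1)
    (hφ : Pi.spanSubset ℝ (J : Set ι) ⊓ LinearMap.ker φ = Submodule.span ℝ (pos '' F))
    {d : ι → ℝ} (hdJ : d ∈ Pi.spanSubset ℝ (J : Set ι)) (hφd : 0 < φ d)
    (hd : ∀ i, 0 ≤ d i ∨ ∃ v ∈ F, 0 < pos v i) :
    ∃ a, insert a F ∈ faces pos T J ∧ 0 < φ (pos a) := by
  obtain ⟨s, hs, hFs, u, hu, hu_nonneg, rfl⟩ := hT.exists_direction ht hFt hd
  have hFJ : ∀ v ∈ F, pos v ∈ Pi.spanSubset ℝ (J : Set ι) := fun v hv =>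
    (hφ.ge (Submodule.subset_span ⟨v, hv, rfl⟩)).1
  obtain ⟨a, has, ha⟩ : ∃ a ∈ s, 0 < u a * φ (pos a) := by
    refine exists_lt_of_sum_lt (f := fun _ => (0 : ℝ)) ?_
    simpa [Finsupp.linearCombination_apply_of_mem_supported ℝ hu] using hφd
  have haF : a ∉ F := fun haF => by simp [apply_eq_zero_of_mem hφ haF] at ha
  have hφa : 0 < φ (pos a) := pos_of_mul_pos_right ha (hu_nonneg a haF)
  have hua : 0 < u a := pos_of_mul_pos_left ha hφa.le
  refine ⟨a, mem_faces.2 ⟨⟨s, hs, insert_subset has hFs, ?_⟩, ?_⟩, hφa⟩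
  · rw [card_insert_of_notMem haF, hcard]
  · exact (forall_mem_insert _ _ _).2
      ⟨hT.pos_mem_spanSubset hs hFJ hu hu_nonneg hdJ has hua, hFJ⟩

/-- The vectors `φ(b) a` and `φ(a) b` differ by an element of the wall `φ = 0`, so that the cones
over `insert a F` and `insert b F` have a common point using both `a` and `b`. -/
theorem eq_of_insert_mem_faces (hT : IsOrthantFan pos T)
    (hφ : Pi.spanSubset ℝ (J : Set ι) ⊓ LinearMap.ker φ = Submodule.span ℝ (pos '' F)) {a b : V}
    (ha : insert a F ∈ faces pos T J) (hb : insert b F ∈ faces pos T J)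
    (hφa : 0 < φ (pos a)) (hφb : 0 < φ (pos b)) : a = b := by
  obtain ⟨⟨s, hs, has, _⟩, haJ⟩ := mem_faces.1 ha
  obtain ⟨⟨t, ht, hbt, _⟩, hbJ⟩ := mem_faces.1 hb
  have hwall : φ (pos b) • pos a - φ (pos a) • pos b ∈ Submodule.span ℝ (pos '' F) :=
    hφ.le ⟨sub_mem (Submodule.smul_mem _ _ (haJ a (mem_insert_self a F)))
      (Submodule.smul_mem _ _ (hbJ b (mem_insert_self b F))), by simp [mul_comm]⟩
  obtain ⟨f, hf, hfeq⟩ := (Finsupp.mem_span_image_iff_linearCombination ℝ).1 hwall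
  have hfs : f ∈ Finsupp.supported ℝ ℝ (s : Set V) :=
    Finsupp.supported_mono (coe_subset.2 ((subset_insert a F).trans has)) hf
  have hft : f ∈ Finsupp.supported ℝ ℝ (t : Set V) :=
    Finsupp.supported_mono (coe_subset.2 ((subset_insert b F).trans hbt)) hf
  have hweights : f⁻ + .single a (φ (pos b)) = f⁺ + .single b (φ (pos a)) := by
    refine hT.weights_eq hs ht
      (add_mem_nonnegWeights (negPart_mem_nonnegWeights hfs)
        (single_mem_nonnegWeights (has (mem_insert_self a F)) hφb.le))
      (add_mem_nonnegWeights (posPart_mem_nonnegWeights hft)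
        (single_mem_nonnegWeights (hbt (mem_insert_self b F)) hφa.le)) ?_
    rw [← posPart_sub_negPart f, map_sub] at hfeq
    simp only [map_add, Finsupp.linearCombination_single]
    linear_combination -hfeq
  have haF : a ∉ F := fun h => hφa.ne' (apply_eq_zero_of_mem hφ h)
  have hfa : f a = 0 := (Finsupp.mem_supported' ℝ f).1 hf a haF
  by_contra hab
  have hweights_a := DFunLike.congr_fun hweights a
  simp [posPart_def, negPart_def, hfa, hφb.ne', hab] at hweights_a

theorem card_cofaces_pos (hT : IsOrthantFan pos T) (ht : t ∈ T) (hFt : F ⊆ t)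
    (hcard : #J = #F + 1)
    (hφ : Pi.spanSubset ℝ (J : Set ι) ⊓ LinearMap.ker φ = Submodule.span ℝ (pos '' F))
    {d : ι → ℝ} (hdJ : d ∈ Pi.spanSubset ℝ (J : Set ι)) (hφd : 0 < φ d)
    (hd : ∀ i, 0 ≤ d i ∨ ∃ v ∈ F, 0 < pos v i) :
    #{s ∈ faces pos T J | F ⊆ s ∧ ∃ v ∈ s, 0 < φ (pos v)} = 1 := by
  obtain ⟨a, ha, hφa⟩ := hT.exists_insert_mem_faces ht hFt hcard hφ hdJ hφd hd
  refine card_eq_one.2 ⟨insert a F, eq_singleton_iff_unique_mem.2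
    ⟨mem_filter.2 ⟨ha, subset_insert a F, a, mem_insert_self a F, hφa⟩, fun s hs => ?_⟩⟩
  obtain ⟨hsJ, hFs, v, hv, hφv⟩ := mem_filter.1 hs
  obtain ⟨b, _, rfl⟩ := exists_eq_insert_of_mem_faces hsJ hFs hcard
  obtain rfl : v = b := (mem_insert.1 hv).resolve_right
    fun hvF => hφv.ne' (apply_eq_zero_of_mem hφ hvF)
  rw [hT.eq_of_insert_mem_faces hφ ha hsJ hφa hφv]

theorem card_cofaces_interior (hT : IsOrthantFan pos T) (ht : t ∈ T) (hFt : F ⊆ t)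
    (hcard : #J = #F + 1) (hFJ : ∀ v ∈ F, pos v ∈ Pi.spanSubset ℝ (J : Set ι))
    (hinterior : ∀ i ∈ J, ∃ v ∈ F, 0 < pos v i) : #{s ∈ faces pos T J | F ⊆ s} = 2 := by
  have hF : LinearIndepOn ℝ pos (F : Set V) := (hT.linearIndepOn ht).mono (coe_subset.2 hFt)
  obtain ⟨φ, hφ, d, hdJ, hφd⟩ := exists_inf_ker_eq
    (U := Submodule.span ℝ (pos '' F)) (W := Pi.spanSubset ℝ (J : Set ι))
    (Submodule.span_le.2 (by simpa [Set.subset_def]))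
    (by rw [finrank_spanSubset_coe, hcard, Set.image_eq_range, finrank_span_eq_card hF]; simp)
  have hd {e : ι → ℝ} (heJ : e ∈ Pi.spanSubset ℝ (J : Set ι)) (i : ι) :
      0 ≤ e i ∨ ∃ v ∈ F, 0 < pos v i := by
    by_cases hi : i ∈ J
    · exact .inr (hinterior i hi)
    · exact .inl (Pi.mem_spanSubset_iff.1 heJ i hi).ge
  have hpos := hT.card_cofaces_pos ht hFt hcard hφ hdJ (hφd ▸ one_pos) (hd hdJ)
  have hneg := hT.card_cofaces_pos (φ := -φ) ht hFt hcard (by rwa [LinearMap.ker_neg])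
    (neg_mem hdJ) (by simp [hφd]) (hd (neg_mem hdJ))
  have hside : ∀ s ∈ faces pos T J, F ⊆ s →
      ((¬ ∃ v ∈ s, 0 < φ (pos v)) ↔ ∃ v ∈ s, 0 < (-φ) (pos v)) := by
    intro s hs hFs
    obtain ⟨a, haF, rfl⟩ := exists_eq_insert_of_mem_faces hs hFs hcard
    have hne := hT.apply_ne_zero_of_insert_mem_faces hφ haF hs
    have hzero : ∀ v ∈ F, φ (pos v) = 0 := fun v => apply_eq_zero_of_mem hφ
    simp +contextual [hzero, hne.le_iff_lt]
  rw [← card_filter_add_card_filter_not fun s => ∃ v ∈ s, 0 < φ (pos v), filter_filter,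
    filter_filter, hpos, filter_congr fun s hs => and_congr_right (hside s hs), hneg]

theorem card_cofaces_boundary [DecidableEq ι] (hT : IsOrthantFan pos T) (hF : F ∈ faces pos T I)
    {k : ι} (hk : k ∉ I) : #{s ∈ faces pos T (insert k I) | F ⊆ s} = 1 := by
  obtain ⟨⟨t, ht, hFt, hFI⟩, _⟩ := mem_faces.1 hF
  have hcard : #(insert k I) = #F + 1 := by rw [card_insert_of_notMem hk, hFI]
  have hφ : Pi.spanSubset ℝ ((insert k I : Finset ι) : Set ι) ⊓
      LinearMap.ker (LinearMap.proj k) = Submodule.span ℝ (pos '' F) := by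
    rw [hT.span_image_of_mem_faces hF]
    ext x
    simp only [Submodule.mem_inf, Pi.mem_spanSubset_iff, LinearMap.mem_ker, LinearMap.proj_apply,
      mem_coe, mem_insert, not_or]
    grind
  have hd : Pi.single k (1 : ℝ) ∈ Pi.spanSubset ℝ ((insert k I : Finset ι) : Set ι) :=
    Pi.mem_spanSubset_iff.2 fun i hi => Pi.single_eq_of_ne (by grind) _
  have hd_nonneg : (0 : ι → ℝ) ≤ Pi.single k 1 := Pi.single_nonneg.2 zero_le_one
  rw [← hT.card_cofaces_pos ht hFt hcard hφ hd (by simp) fun i => .inl (hd_nonneg i)]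
  refine congrArg card (filter_congr fun s hs => (and_iff_left_of_imp fun hFs => ?_).symm)
  obtain ⟨a, haF, rfl⟩ := exists_eq_insert_of_mem_faces hs hFs hcard
  obtain ⟨⟨s, hsT, has, _⟩, _⟩ := mem_faces.1 hs
  have ha := mem_insert_self a F
  exact ⟨a, ha, (hT.pos_nonneg hsT (has ha) k).lt_of_ne'
    (hT.apply_ne_zero_of_insert_mem_faces hφ haF hs)⟩

end IsOrthantFan

end Faces

section DoubleCounting

variable {α β : Type*} {A : Finset α} {B : Finset β}

theorem odd_card_filter_iff_of_odd_degrees {r : α → β → Prop} {p : α → Prop} {q : β → Prop}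
    [∀ a b, Decidable (r a b)] [DecidablePred p] [DecidablePred q]
    (hA : ∀ a ∈ A, Odd #{b ∈ B | r a b} ↔ p a) (hB : ∀ b ∈ B, Odd #{a ∈ A | r a b} ↔ q b) :
    Odd #{a ∈ A | p a} ↔ Odd #{b ∈ B | q b} := by
  have hcount : ∑ a ∈ A, #{b ∈ B | r a b} = ∑ b ∈ B, #{a ∈ A | r a b} :=
    sum_card_bipartiteAbove_eq_sum_card_bipartiteBelow r
  rw [← filter_congr hA, ← filter_congr hB, ← odd_sum_iff_odd_card_odd,
    ← odd_sum_iff_odd_card_odd, hcount]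

end DoubleCounting

section Doors

variable {V ι : Type*} [DecidableEq ι] {ℓ : V → ι} {s F : Finset V} {I : Finset ι} {k : ι}

/-- The facets of the cell `s` that carry exactly the labels `I`, that is, the doors of Sperner's
argument. -/
def doors (ℓ : V → ι) (I : Finset ι) (s : Finset V) : Finset (Finset V) :=
  {F ∈ powersetCard #I s | F.image ℓ = I}

theorem mem_doors : F ∈ doors ℓ I s ↔ F ⊆ s ∧ #F = #I ∧ F.image ℓ = I := by
  simp [doors, and_assoc]

theorem subset_image_of_mem_doors (hF : F ∈ doors ℓ I s) : I ⊆ s.image ℓ := by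
  obtain ⟨hFs, -, rfl⟩ := mem_doors.1 hF
  exact image_subset_image hFs

theorem injOn_of_mem_doors (hF : F ∈ doors ℓ I s) : Set.InjOn ℓ F := by
  obtain ⟨-, hcard, himage⟩ := mem_doors.1 hF
  exact card_image_iff.1 (by rw [himage, hcard])

theorem erase_mem_doors [DecidableEq V] (hs : #s = #I + 1) {v : V} (hv : v ∈ s)
    (hI : ∀ i ∈ I, ∃ w ∈ s, w ≠ v ∧ ℓ w = i) : s.erase v ∈ doors ℓ I s := by
  have hcard : #(s.erase v) = #I := by rw [card_erase_of_mem hv, hs, Nat.add_sub_cancel]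
  refine mem_doors.2 ⟨erase_subset v s, hcard, (eq_of_subset_of_card_le (fun i hi => ?_)
    (card_image_le.trans hcard.le)).symm⟩
  obtain ⟨w, hws, hwv, rfl⟩ := hI i hi
  exact mem_image_of_mem ℓ (mem_erase.2 ⟨hwv, hws⟩)

theorem eq_erase_of_mem_doors [DecidableEq V] (hs : #s = #I + 1) (hF : F ∈ doors ℓ I s) {v : V}
    (hv : v ∈ s) (hvF : v ∉ F) : F = s.erase v := by
  obtain ⟨hFs, hcard, -⟩ := mem_doors.1 hF
  refine eq_of_subset_of_card_le (subset_erase.2 ⟨hFs, hvF⟩) ?_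
  rw [card_erase_of_mem hv, hs, hcard, Nat.add_sub_cancel]

theorem card_doors_of_image_eq_insert (hs : #s = #I + 1) (hk : k ∉ I)
    (himage : s.image ℓ = insert k I) : #(doors ℓ I s) = 1 := by
  classical
  obtain ⟨v, hv, rfl⟩ := mem_image.1 (himage ▸ mem_insert_self k I)
  refine card_eq_one.2 ⟨s.erase v, eq_singleton_iff_unique_mem.2 ⟨?_, fun F hF => ?_⟩⟩
  · refine erase_mem_doors hs hv fun i hi => ?_
    obtain ⟨w, hw, rfl⟩ := mem_image.1 (himage ▸ mem_insert_of_mem hi)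
    exact ⟨w, hw, fun hwv => hk (hwv ▸ hi), rfl⟩
  · exact eq_erase_of_mem_doors hs hF hv fun hvF =>
      hk ((mem_doors.1 hF).2.2 ▸ mem_image_of_mem ℓ hvF)

theorem card_doors_of_image_eq (hs : #s = #I + 1) (himage : s.image ℓ = I) :
    #(doors ℓ I s) = 2 := by
  classical
  obtain ⟨x, hx, y, hy, hxy, hℓ⟩ := exists_ne_map_eq_of_card_lt_of_maps_to
    (by rw [hs]; exact Nat.lt_succ_self _) fun v hv => himage ▸ mem_image_of_mem ℓ hv
  refine card_eq_two.2 ⟨s.erase x, s.erase y, fun h => hxy ((erase_injOn s) hx hy h), ?_⟩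
  ext F
  simp only [mem_insert, mem_singleton]
  constructor
  · intro hF
    by_cases hxF : x ∈ F
    · exact .inr (eq_erase_of_mem_doors hs hF hy fun hyF =>
        hxy (injOn_of_mem_doors hF hxF hyF hℓ))
    · exact .inl (eq_erase_of_mem_doors hs hF hx hxF)
  · have herase {v w : V} (hv : v ∈ s) (hw : w ∈ s) (hwv : w ≠ v) (hℓ : ℓ w = ℓ v) :
        s.erase v ∈ doors ℓ I s := by
      refine erase_mem_doors hs hv fun i hi => ?_
      obtain ⟨u, hu, rfl⟩ := mem_image.1 (himage.symm ▸ hi)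
      by_cases huv : u = v
      · exact ⟨w, hw, hwv, huv ▸ hℓ⟩
      · exact ⟨u, hu, huv, rfl⟩
    rintro (rfl | rfl)
    · exact herase hx hy hxy.symm hℓ.symm
    · exact herase hy hx hxy hℓ

theorem odd_card_doors_iff (hs : #s = #I + 1) (hk : k ∉ I) (himage : s.image ℓ ⊆ insert k I) :
    Odd #(doors ℓ I s) ↔ s.image ℓ = insert k I := by
  have hne : I ≠ insert k I := fun h => hk (h ▸ mem_insert_self k I)
  by_cases hI : I ⊆ s.image ℓ
  · by_cases hks : k ∈ s.image ℓ
    · have himage_eq := himage.antisymm (insert_subset hks hI)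
      simp [card_doors_of_image_eq_insert hs hk himage_eq, himage_eq]
    · have himage_eq := ((subset_insert_iff_of_notMem hks).1 himage).antisymm hI
      simp [card_doors_of_image_eq hs himage_eq, himage_eq, hne]
  · have hempty : doors ℓ I s = ∅ :=
      eq_empty_of_forall_notMem fun F hF => hI (subset_image_of_mem_doors hF)
    have hne : s.image ℓ ≠ insert k I := fun h => hI (h ▸ subset_insert k I)
    simp [hempty, hne]

end Doors

section Parity

variable {V ι : Type*} {pos : V → ι → ℝ} {T : Finset (Finset V)} {ℓ : V → ι}

theorem label_mem_of_mem_spanSubset [Finite ι] {I : Finset ι} {v : V} (hℓ : pos v (ℓ v) ≠ 0)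
    (hv : pos v ∈ Pi.spanSubset ℝ (I : Set ι)) : ℓ v ∈ I := by
  by_contra hvI
  exact hℓ (Pi.mem_spanSubset_iff.1 hv _ hvI)

namespace IsOrthantFan

section Wall

variable [Finite ι] [DecidableEq V] [DecidableEq ι] {F s t : Finset V} {I : Finset ι} {k : ι}

theorem odd_card_cofaces_iff (hT : IsOrthantFan pos T) (hℓ : ∀ v, pos v (ℓ v) ≠ 0) (ht : t ∈ T)
    (hFt : F ⊆ t) (hcard : #F = #I) (himage : F.image ℓ = I) (hk : k ∉ I) :
    Odd #{s ∈ faces pos T (insert k I) | F ⊆ s} ↔ F ∈ faces pos T I := by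
  by_cases hF : F ∈ faces pos T I
  · simp [hT.card_cofaces_boundary hF hk, hF]
  by_cases hFJ : ∀ v ∈ F, pos v ∈ Pi.spanSubset ℝ ((insert k I : Finset ι) : Set ι)
  · have hinterior : ∀ i ∈ insert k I, ∃ v ∈ F, pos v i ≠ 0 := by
      refine (forall_mem_insert _ _ _).2 ⟨?_, fun i hi => ?_⟩
      · by_contra! hzero
        refine hF (mem_faces.2 ⟨⟨t, ht, hFt, hcard⟩, fun v hv =>
          Pi.mem_spanSubset_iff.2 fun i hi => ?_⟩)
        by_cases hik : i = k
        · exact hik ▸ hzero v hv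
        · exact Pi.mem_spanSubset_iff.1 (hFJ v hv) i
            (mem_coe.not.2 (by simpa [hik] using hi))
      · obtain ⟨v, hv, rfl⟩ := mem_image.1 (himage.symm ▸ hi)
        exact ⟨v, hv, hℓ v⟩
    have hcofaces := hT.card_cofaces_interior ht hFt (by rw [card_insert_of_notMem hk, hcard]) hFJ
      fun i hi => (hinterior i hi).imp fun v hv =>
        ⟨hv.1, (hT.pos_nonneg ht (hFt hv.1) i).lt_of_ne' hv.2⟩
    simp [hcofaces, hF]
  · have hempty : {s ∈ faces pos T (insert k I) | F ⊆ s} = ∅ :=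
      filter_eq_empty_iff.2 fun s hs hFs => hFJ fun v hv => (mem_faces.1 hs).2 v (hFs hv)
    simp [hempty, hF]

theorem odd_card_insert_iff (hT : IsOrthantFan pos T) (hℓ : ∀ v, pos v (ℓ v) ≠ 0) (hk : k ∉ I) :
    Odd #{s ∈ faces pos T (insert k I) | s.image ℓ = insert k I} ↔
      Odd #{s ∈ faces pos T I | s.image ℓ = I} := by
  obtain ⟨B, hB⟩ : ∃ B : Finset (Finset V), ∀ F,
      F ∈ B ↔ (∃ t ∈ T, F ⊆ t ∧ #F = #I) ∧ F.image ℓ = I :=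
    ⟨{F ∈ T.biUnion (powersetCard #I) | F.image ℓ = I}, by simp⟩
  have hdoors : ∀ s ∈ faces pos T (insert k I), Odd #{F ∈ B | F ⊆ s} ↔ s.image ℓ = insert k I := by
    intro s hs
    obtain ⟨⟨t, ht, hst, -⟩, hsJ⟩ := mem_faces.1 hs
    have hdoors_eq : {F ∈ B | F ⊆ s} = doors ℓ I s := by
      ext F
      rw [mem_filter, hB, mem_doors]
      exact ⟨fun ⟨⟨⟨_, _, _, hcard⟩, himage⟩, hFs⟩ => ⟨hFs, hcard, himage⟩,
        fun ⟨hFs, hcard, himage⟩ => ⟨⟨⟨t, ht, hFs.trans hst, hcard⟩, himage⟩, hFs⟩⟩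
    rw [hdoors_eq, odd_card_doors_iff (by rw [card_of_mem_faces hs, card_insert_of_notMem hk]) hk]
    exact image_subset_iff.2 fun v hv => label_mem_of_mem_spanSubset (hℓ v) (hsJ v hv)
  have hcofaces : ∀ F ∈ B, Odd #{s ∈ faces pos T (insert k I) | F ⊆ s} ↔ F ∈ faces pos T I := by
    intro F hF
    obtain ⟨⟨t, ht, hFt, hcard⟩, himage⟩ := (hB F).1 hF
    exact hT.odd_card_cofaces_iff hℓ ht hFt hcard himage hk
  have hfaces : {F ∈ B | F ∈ faces pos T I} = {F ∈ faces pos T I | F.image ℓ = I} := by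
    ext F
    rw [mem_filter, mem_filter, hB]
    exact ⟨fun h => ⟨h.2, h.1.2⟩, fun h => ⟨⟨(mem_faces.1 h.1).1, h.2⟩, h.1⟩⟩
  rw [← hfaces]
  exact odd_card_filter_iff_of_odd_degrees hdoors hcofaces

theorem odd_card_faces (hT : IsOrthantFan pos T) (hℓ : ∀ v, pos v (ℓ v) ≠ 0) (I : Finset ι) :
    Odd #{s ∈ faces pos T I | s.image ℓ = I} := by
  induction I using Finset.induction_on with
  | empty =>
    obtain ⟨t, ht, -⟩ := hT.exists_mem_vertexCone (x := 0) le_rfl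
    have hfaces : {s ∈ faces pos T ∅ | s.image ℓ = ∅} = {∅} := by
      ext s
      simp only [mem_filter, mem_faces, image_eq_empty, mem_singleton]
      exact ⟨fun h => h.2, fun h => by simpa [h] using ⟨t, ht⟩⟩
    rw [hfaces, card_singleton]
    exact odd_one
  | insert k I hk ih => exact (hT.odd_card_insert_iff hℓ hk).2 ih

end Wall

theorem odd_card_fully_labeled [Finite ι] (hT : IsOrthantFan pos T)
    (hℓ : ∀ v, pos v (ℓ v) ≠ 0) [DecidablePred fun s : Finset V => ∀ k, ∃ v ∈ s, ℓ v = k] :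
    Odd #{s ∈ T | ∀ k, ∃ v ∈ s, ℓ v = k} := by
  classical
  have := Fintype.ofFinite ι
  convert hT.odd_card_faces hℓ univ using 2
  ext s
  have hlabels : s.image ℓ = univ ↔ ∀ k, ∃ v ∈ s, ℓ v = k := by
    simp [eq_univ_iff_forall]
  rw [mem_filter, mem_filter, mem_faces, hlabels]
  refine and_congr_left fun h => ⟨fun hs => ⟨⟨s, hs, Subset.rfl, ?_⟩, fun v _ =>
    Pi.mem_spanSubset_iff.2 (by simp)⟩, ?_⟩
  · refine le_antisymm ?_ ((hlabels.2 h).symm ▸ card_image_le)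
    simpa using (hT.linearIndepOn hs).fintype_card_le_finrank
  · rintro ⟨⟨t, ht, hst, hcard⟩, -⟩
    have hcard_le : #t ≤ #s :=
      hcard ▸ by simpa using (hT.linearIndepOn ht).fintype_card_le_finrank
    rwa [eq_of_subset_of_card_le hst hcard_le]

end IsOrthantFan

end Parity

section Triangulation

variable {V ι : Type*} [Fintype ι] [Nonempty ι] {pos : V → ι → ℝ} {T : Finset (Finset V)}

theorem exists_mem_vertexCone_of_stdSimplex_subset
    (hcover : stdSimplex ℝ ι ⊆ ⋃ t ∈ T, convexHull ℝ (pos '' t)) {x : ι → ℝ} (hx : 0 ≤ x) :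
    ∃ t ∈ T, x ∈ vertexCone pos t := by
  classical
  have hslice {y : ι → ℝ} (hy : y ∈ stdSimplex ℝ ι) : ∃ t ∈ T, y ∈ vertexCone pos t := by
    obtain ⟨t, ht, hyt⟩ := Set.mem_iUnion₂.1 (hcover hy)
    exact ⟨t, ht, convexHull_subset_vertexCone hyt⟩
  rcases (sum_nonneg fun i _ => hx i).eq_or_lt' with hsum | hsum
  · have hx0 : x = 0 := funext fun i => (sum_eq_zero_iff_of_nonneg fun i _ => hx i).1 hsum i
      (mem_univ i)
    obtain ⟨t, ht, hyt⟩ := hslice (single_mem_stdSimplex ℝ (Classical.arbitrary ι))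
    exact ⟨t, ht, by simpa [hx0] using smul_mem_vertexCone le_rfl hyt⟩
  · obtain ⟨t, ht, hxt⟩ := hslice (y := (∑ i, x i)⁻¹ • x)
      ⟨fun i => mul_nonneg (inv_nonneg.2 hsum.le) (hx i), by simp [← mul_sum, hsum.ne']⟩
    exact ⟨t, ht, by simpa [smul_smul, hsum.ne'] using smul_mem_vertexCone hsum.le hxt⟩

theorem isOrthantFan_of_triangulation
    (hindep : ∀ t ∈ T, AffineIndependent ℝ fun v : t => pos v)
    (hcover : ⋃ t ∈ T, convexHull ℝ (pos '' t) = stdSimplex ℝ ι)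
    (hinter : ∀ s ∈ T, ∀ t ∈ T, convexHull ℝ (pos '' s) ∩ convexHull ℝ (pos '' t) ⊆
      convexHull ℝ (pos '' (s ∩ t))) : IsOrthantFan pos T := by
  have hvertex : ∀ t ∈ T, ∀ v ∈ t, pos v ∈ stdSimplex ℝ ι := fun t ht v hv =>
    hcover ▸ Set.mem_biUnion ht (subset_convexHull ℝ _ ⟨v, hv, rfl⟩)
  refine ⟨?_, injOn_linearCombination (σ := ∑ i, LinearMap.proj i) ?_ hindep hinter, ?_⟩
  · intro w hw i
    obtain ⟨t, ht, hw, hwt⟩ := Set.mem_iUnion₂.1 hw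
    simpa [Finsupp.linearCombination_apply_of_mem_supported ℝ hwt] using
      sum_nonneg fun v hv => mul_nonneg (hw v) ((hvertex t ht v hv).1 i)
  · intro t ht v hv
    simpa using (hvertex t ht v hv).2
  · intro x hx
    obtain ⟨t, ht, w, hw, hwx⟩ := exists_mem_vertexCone_of_stdSimplex_subset hcover.ge hx
    exact ⟨w, Set.mem_biUnion ht hw, hwx⟩

end Triangulation

end Sperner

theorem sperner_lemma_dim2_general {ι V : Type*} [Fintype ι] [Nonempty ι]
    {pos : V → ι → ℝ} {T : Finset (Finset V)}
    (hindep : ∀ t ∈ T, AffineIndependent ℝ fun v : t => pos v)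
    (hcover : ⋃ t ∈ T, convexHull ℝ (pos '' t) = stdSimplex ℝ ι)
    (hinter : ∀ s ∈ T, ∀ t ∈ T, convexHull ℝ (pos '' s) ∩ convexHull ℝ (pos '' t) ⊆
      convexHull ℝ (pos '' (s ∩ t)))
    {ℓ : V → ι} (hℓ : ∀ v, pos v (ℓ v) ≠ 0)
    [DecidablePred fun s : Finset V => ∀ k, ∃ v ∈ s, ℓ v = k] :
    Odd (T.filter fun s => ∀ k, ∃ v ∈ s, ℓ v = k).card ∧ ∃ s ∈ T, ∀ k, ∃ v ∈ s, ℓ v = k := by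
  have hfan := Sperner.isOrthantFan_of_triangulation hindep hcover hinter
  have hodd := hfan.odd_card_fully_labeled hℓ
  obtain ⟨s, hs⟩ := Finset.card_pos.1 hodd.pos
  exact ⟨hodd, s, Finset.mem_filter.1 hs⟩

/-- Sperner's lemma in dimension 2: any Sperner labeling (each vertex of the
triangulation is labeled by an index at which its barycentric coordinate is
nonzero) admits an odd number of fully labeled small triangles; in particular
at least one fully labeled triangle exists. -/
theorem sperner_lemma_dim2 (T : Triangulation2)
    (ℓ : T.V → Fin 3) (hℓ : ∀ v, T.pos v (ℓ v) ≠ 0) :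
    Odd ((T.triangles.filter (fun s => ∀ k : Fin 3, ∃ v ∈ s, ℓ v = k)).card) ∧
    ∃ s ∈ T.triangles, ∀ k : Fin 3, ∃ v ∈ s, ℓ v = k := by
  refine sperner_lemma_dim2_general T.indep T.covers (fun s hs t ht => ?_) hℓ
  simpa using (T.inter s hs t ht).subset
end

section
/- Sperner's lemma: for a Sperner labeling of a simplicial subdivision of an n-dimensional simplex, the number of fully labeled small n-simplices is odd; in particular there is at least one fully labeled simplex. -/
open scoped Classical

/-- A simplicial subdivision of the standard `n`-dimensional simplex:
a finite vertex set with geometric positions in the simplex, and a finite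
family of small `n`-simplices (each given by its `n+1` affinely independent
vertices) whose convex hulls cover the simplex and intersect pairwise in the
convex hull of their common vertices. -/
structure SimplicialSubdivision (n : ℕ) where
  V : Type
  [fintypeV : Fintype V]
  [decV : DecidableEq V]
  pos : V → (Fin (n + 1) → ℝ)
  pos_mem : ∀ v, pos v ∈ stdSimplex ℝ (Fin (n + 1))
  simplices : Finset (Finset V)
  card_simplex : ∀ s ∈ simplices, s.card = n + 1
  indep : ∀ s ∈ simplices, AffineIndependent ℝ (fun v : s => pos v)
  covers : (⋃ s ∈ simplices, convexHull ℝ (pos '' (s : Set V)))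
      = stdSimplex ℝ (Fin (n + 1))
  inter : ∀ s ∈ simplices, ∀ t ∈ simplices,
    convexHull ℝ (pos '' (s : Set V)) ∩ convexHull ℝ (pos '' (t : Set V))
      = convexHull ℝ (pos '' ((s ∩ t : Finset V) : Set V))

/-!
The labels of a cell on the face `insert j J` of the big simplex lie in `insert j J`, so the number
of its facets with label set `J` is odd exactly when the cell carries all of `insert j J`. Counting
the pairs of such a cell and a facet of it with label set `J`, first by cells and then by facets,
therefore yields Sperner's lemma by induction on `J`, once a facet is known to lie in two cells if
it is interior to the face and in one cell if it is on the boundary.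

To see this for a facet `F`, choose a linear functional `φ` that cuts out the span of `F`. On each
side of `φ` that the face reaches, moving off the barycentre of `F` in a generic direction enters a
cell containing `F`, and two such cells on the same side would overlap.
-/

open Finset Filter Module Topology

section Doors

variable {V ι : Type*} [DecidableEq ι] {ℓ : V → ι} {J : Finset ι} {j : ι}

lemma filter_powersetCard_image_eq_singleton {σ : Finset V} (hj : j ∉ J) (hcard : #σ = #J + 1)
    (hσ : σ.image ℓ = insert j J) :
    {F ∈ σ.powersetCard #J | F.image ℓ = J} = {{v ∈ σ | ℓ v ∈ J}} := by
  have hinj : Set.InjOn ℓ σ := by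
    rw [← card_image_iff, hσ, hcard, card_insert_of_notMem hj]
  ext F
  simp only [mem_filter, mem_powersetCard, mem_singleton]
  constructor
  · rintro ⟨⟨hFσ, -⟩, hF⟩
    ext v
    refine ⟨fun hv ↦ mem_filter.2 ⟨hFσ hv, hF ▸ mem_image_of_mem ℓ hv⟩, fun hv ↦ ?_⟩
    obtain ⟨hvσ, hvJ⟩ := mem_filter.1 hv
    obtain ⟨w, hw, hwv⟩ := mem_image.1 (hF ▸ hvJ)
    exact hinj (hFσ hw) hvσ hwv ▸ hw
  · rintro rfl
    have himage : image ℓ {v ∈ σ | ℓ v ∈ J} = J := by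
      rw [← filter_image (p := (· ∈ J)), hσ, filter_mem_eq_inter, inter_eq_right]
      exact subset_insert j J
    refine ⟨⟨filter_subset _ _, ?_⟩, himage⟩
    rw [← card_image_of_injOn (hinj.mono (coe_subset.2 (filter_subset _ _))), himage]

lemma even_card_filter_powersetCard_image_eq {σ : Finset V} (hcard : #σ = #J + 1)
    (hσ : σ.image ℓ = J) : Even #{F ∈ σ.powersetCard #J | F.image ℓ = J} := by
  obtain ⟨a, ha, b, hb, hab, hℓ⟩ := exists_ne_map_eq_of_card_lt_of_maps_to
    (by lia : #J < #σ) (fun v hv ↦ hσ ▸ mem_image_of_mem ℓ hv)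
  have image_erase : ∀ {x y}, x ∈ σ → y ∈ σ → x ≠ y → ℓ x = ℓ y → (σ.erase x).image ℓ = J := by
    intro x y hx hy hxy hℓxy
    rw [← insert_erase hx, image_insert, insert_eq_of_mem] at hσ
    · exact hσ
    · exact hℓxy ▸ mem_image_of_mem ℓ (mem_erase.2 ⟨hxy.symm, hy⟩)
  have heq : {F ∈ σ.powersetCard #J | F.image ℓ = J} = {σ.erase a, σ.erase b} := by
    ext F
    simp only [mem_filter, mem_powersetCard, mem_insert, mem_singleton]
    constructor
    · rintro ⟨⟨hFσ, hFcard⟩, hF⟩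
      have hinj : Set.InjOn ℓ F := by rw [← card_image_iff, hF, hFcard]
      have eq_erase : ∀ {x}, x ∈ σ → x ∉ F → F = σ.erase x := fun hx hxF ↦
        eq_of_subset_of_card_le (subset_erase.2 ⟨hFσ, hxF⟩) (by rw [card_erase_of_mem hx]; lia)
      by_cases haF : a ∈ F
      · exact Or.inr (eq_erase hb fun hbF ↦ hab (hinj haF hbF hℓ))
      · exact Or.inl (eq_erase ha haF)
    · rintro (rfl | rfl)
      · exact ⟨⟨erase_subset _ _, by rw [card_erase_of_mem ha]; lia⟩, image_erase ha hb hab hℓ⟩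
      · exact ⟨⟨erase_subset _ _, by rw [card_erase_of_mem hb]; lia⟩,
          image_erase hb ha hab.symm hℓ.symm⟩
  rw [heq, card_pair fun h ↦ hab ((erase_inj σ ha).1 h)]
  exact even_two

lemma odd_card_filter_powersetCard_image_eq_iff {σ : Finset V} (hj : j ∉ J) (hcard : #σ = #J + 1)
    (hσ : σ.image ℓ ⊆ insert j J) :
    Odd #{F ∈ σ.powersetCard #J | F.image ℓ = J} ↔ σ.image ℓ = insert j J := by
  refine ⟨fun hodd ↦ ?_, fun h ↦ ?_⟩
  · obtain ⟨F, hF⟩ := card_pos.1 hodd.pos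
    simp only [mem_filter, mem_powersetCard] at hF
    have hJσ : J ⊆ σ.image ℓ := hF.2 ▸ image_subset_image hF.1.1
    have hne : σ.image ℓ ≠ J := fun h ↦
      Nat.not_even_iff_odd.2 hodd (even_card_filter_powersetCard_image_eq hcard h)
    refine hσ.antisymm (insert_subset ?_ hJσ)
    by_contra hjσ
    exact hne (((subset_insert_iff_of_notMem hjσ).1 hσ).antisymm hJσ)
  · rw [filter_powersetCard_image_eq_singleton hj hcard h, card_singleton]
    exact odd_one

lemma odd_card_filter_image_eq_insert_iff {T T' : Finset (Finset V)} (hj : j ∉ J)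
    (hT : ∀ σ ∈ T, #σ = #J + 1) (hT' : ∀ F ∈ T', #F = #J)
    (hlabel : ∀ σ ∈ T, σ.image ℓ ⊆ insert j J)
    (hfacet : ∀ F, #F = #J → F.image ℓ = J → (Odd #{σ ∈ T | F ⊆ σ} ↔ F ∈ T')) :
    Odd #{σ ∈ T | σ.image ℓ = insert j J} ↔ Odd #{F ∈ T' | F.image ℓ = J} := by
  let D : Finset (Finset V) := {F ∈ T.biUnion (powersetCard #J) | F.image ℓ = J}
  have hD : ∀ {F}, F ∈ D ↔ (∃ σ ∈ T, F ⊆ σ ∧ #F = #J) ∧ F.image ℓ = J := by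
    simp [D, mem_powersetCard]
  have count := sum_card_bipartiteAbove_eq_sum_card_bipartiteBelow
    (s := T) (t := D) (fun σ F ↦ F ⊆ σ)
  have above : {σ ∈ T | Odd #(D.bipartiteAbove (fun σ F ↦ F ⊆ σ) σ)} =
      {σ ∈ T | σ.image ℓ = insert j J} := by
    refine filter_congr fun σ hσ ↦ ?_
    rw [← odd_card_filter_powersetCard_image_eq_iff hj (hT σ hσ) (hlabel σ hσ)]
    congr! 2
    ext F
    simp only [bipartiteAbove, mem_filter, hD, mem_powersetCard]
    exact ⟨fun ⟨⟨⟨_, _, _, hF⟩, hJ⟩, hFσ⟩ ↦ ⟨⟨hFσ, hF⟩, hJ⟩,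
      fun ⟨⟨hFσ, hF⟩, hJ⟩ ↦ ⟨⟨⟨σ, hσ, hFσ, hF⟩, hJ⟩, hFσ⟩⟩
  have below : {F ∈ D | Odd #(T.bipartiteBelow (fun σ F ↦ F ⊆ σ) F)} =
      {F ∈ T' | F.image ℓ = J} := by
    ext F
    simp only [bipartiteBelow, mem_filter, hD]
    constructor
    · rintro ⟨⟨⟨_, _, _, hF⟩, hJ⟩, hodd⟩
      exact ⟨(hfacet F hF hJ).1 hodd, hJ⟩
    · rintro ⟨hFT', hJ⟩
      have hodd := (hfacet F (hT' F hFT') hJ).2 hFT'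
      obtain ⟨σ, hσ⟩ := card_pos.1 hodd.pos
      exact ⟨⟨⟨σ, (mem_filter.1 hσ).1, (mem_filter.1 hσ).2, hT' F hFT'⟩, hJ⟩, hodd⟩
  rw [← above, ← below, ← odd_sum_iff_odd_card_odd, ← odd_sum_iff_odd_card_odd, count]

end Doors

section LinearAlgebra

lemma linearIndependent_of_affineIndependent_of_map_eq_one {ι K E : Type*} [Ring K]
    [AddCommGroup E] [Module K E] {p : ι → E} (hp : AffineIndependent K p) (f : E →ₗ[K] K)
    (hf : ∀ i, f (p i) = 1) : LinearIndependent K p := by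
  rw [linearIndependent_iff']
  intro s w hw
  refine hp.eq_zero_of_sum_eq_zero ?_ hw
  simpa [hf] using congrArg f hw

lemma exists_mem_forall_notMem_of_not_le {K E : Type*} [DivisionRing K] [Infinite K]
    [AddCommGroup E] [Module K E] {W : Submodule K E} {P : Finset (Submodule K E)}
    (hP : ∀ p ∈ P, ¬W ≤ p) : ∃ w ∈ W, ∀ p ∈ P, w ∉ p := by
  have htop : ⊤ ∉ P.image (Submodule.comap W.subtype) := by
    simpa [Submodule.comap_subtype_eq_top] using hP
  obtain ⟨w, hw⟩ := (Set.ne_univ_iff_exists_notMem _).1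
    (Subspace.biUnion_ne_univ_of_top_notMem htop)
  exact ⟨w, w.2, by simpa using hw⟩

lemma exists_inf_ker_eq {K E : Type*} [Field K] [AddCommGroup E] [Module K E]
    {p q : Submodule K E} [FiniteDimensional K q] (hpq : p ≤ q)
    (hrank : finrank K q = finrank K p + 1) : ∃ φ : E →ₗ[K] K, q ⊓ LinearMap.ker φ = p := by
  obtain ⟨u, huq, hup⟩ := SetLike.exists_of_lt (hpq.lt_of_ne (by rintro rfl; lia))
  obtain ⟨φ, hφu, hφ⟩ := Submodule.exists_le_ker_of_notMem hup
  refine ⟨φ, (Submodule.eq_of_le_of_finrank_le (le_inf hpq hφ) ?_).symm⟩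
  have := Submodule.finrank_lt_finrank_of_lt
    (inf_le_left.lt_of_not_ge fun h ↦ hφu (h huq).2 : q ⊓ LinearMap.ker φ < q)
  lia

end LinearAlgebra

lemma eventually_nonneg_add_smul {ι 𝕜 : Type*} [Finite ι] [Field 𝕜] [LinearOrder 𝕜]
    [IsStrictOrderedRing 𝕜] [TopologicalSpace 𝕜] [OrderTopology 𝕜] {c w : ι → 𝕜} (hc : 0 ≤ c)
    (hw : ∀ k, c k = 0 → 0 ≤ w k) : ∀ᶠ ε : 𝕜 in 𝓝[>] 0, 0 ≤ c + ε • w := by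
  refine eventually_all.2 fun k ↦ ?_
  rcases (hc k).eq_or_lt with h0 | hpos
  · filter_upwards [self_mem_nhdsWithin] with ε hε
    exact add_nonneg (hc k) (mul_nonneg (le_of_lt hε) (hw k h0.symm))
  · have hlim : Tendsto (fun ε : 𝕜 ↦ c k + ε * w k) (𝓝[>] 0) (𝓝 (c k)) :=
      tendsto_nhdsWithin_of_tendsto_nhds (Continuous.tendsto' (by fun_prop) _ _ (by simp))
    filter_upwards [hlim.eventually_const_lt hpos] with ε hε using hε.le

section ConvexHull

variable {V 𝕜 E : Type*} [Field 𝕜] [LinearOrder 𝕜] [IsStrictOrderedRing 𝕜] [AddCommGroup E]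
  [Module 𝕜 E] {f : V → E}

lemma exists_nonneg_linearCombination_eq_of_mem_convexHull {s : Set V} {x : E}
    (hx : x ∈ convexHull 𝕜 (f '' s)) :
    ∃ a ∈ Finsupp.supported 𝕜 𝕜 s, 0 ≤ a ∧ Finsupp.linearCombination 𝕜 f a = x := by
  have hconvex : Convex 𝕜 ((Finsupp.supported 𝕜 𝕜 s : Set (V →₀ 𝕜)) ∩ Set.Ici 0) :=
    (Finsupp.supported 𝕜 𝕜 s).convex.inter (convex_Ici (0 : V →₀ 𝕜))
  obtain ⟨a, ⟨ha, ha0⟩, rfl⟩ := convexHull_min (t := Finsupp.linearCombination 𝕜 f ''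
    ((Finsupp.supported 𝕜 𝕜 s : Set (V →₀ 𝕜)) ∩ Set.Ici 0)) (by
      rintro _ ⟨v, hv, rfl⟩
      exact ⟨Finsupp.single v 1, ⟨Finsupp.single_mem_supported 𝕜 1 hv, by simp⟩, by simp⟩)
    (hconvex.linear_image _) hx
  exact ⟨a, ha, ha0, rfl⟩

lemma inv_degree_smul_linearCombination_mem_convexHull {s : Set V} {a : V →₀ 𝕜}
    (ha : a ∈ Finsupp.supported 𝕜 𝕜 s) (ha0 : 0 ≤ a) (hdeg : 0 < a.degree) :
    a.degree⁻¹ • Finsupp.linearCombination 𝕜 f a ∈ convexHull 𝕜 (f '' s) :=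
  a.support.centerMass_mem_convexHull (fun v _ ↦ ha0 v) hdeg
    fun _ hv ↦ Set.mem_image_of_mem f ((Finsupp.mem_supported 𝕜 a).1 ha hv)

end ConvexHull

namespace SimplicialSubdivision

variable {n : ℕ} (S : SimplicialSubdivision n) {J : Finset (Fin (n + 1))} {F G : Finset S.V}

/-- The coordinate subspace spanned by the vertices of the big simplex with index in `J`. -/
noncomputable abbrev coordSubspace (J : Finset (Fin (n + 1))) : Submodule ℝ (Fin (n + 1) → ℝ) :=
  Pi.spanSubset ℝ ↑J

/-- `F` is the vertex set of a face, of any dimension, of a small simplex. -/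
def IsFace (F : Finset S.V) : Prop := ∃ s ∈ S.simplices, F ⊆ s

/-- `F` is a face of the subdivision that `S` induces on the face of the big simplex spanned by the
vertices with index in `J`. -/
structure IsFaceOn (J : Finset (Fin (n + 1))) (F : Finset S.V) : Prop where
  isFace : S.IsFace F
  pos_mem : ∀ v ∈ F, S.pos v ∈ coordSubspace J

/-- The top-dimensional cells of the subdivision that `S` induces on the face of the big simplex
spanned by the vertices with index in `J`. -/
noncomputable def cells (J : Finset (Fin (n + 1))) : Finset (Finset S.V) :=
  {F ∈ S.simplices.biUnion powerset | S.IsFaceOn J F ∧ #F = #J}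

/-- The point of the cone over the big simplex with weight `a v` at each vertex `v`. The cone
replaces the simplex throughout, so that linear algebra applies without normalising weights. -/
noncomputable abbrev comb : (S.V →₀ ℝ) →ₗ[ℝ] (Fin (n + 1) → ℝ) := Finsupp.linearCombination ℝ S.pos

variable {S}

lemma mem_cells : F ∈ S.cells J ↔ S.IsFaceOn J F ∧ #F = #J := by
  simp only [cells, mem_filter, mem_biUnion, mem_powerset, and_iff_right_iff_imp]
  exact fun h ↦ h.1.isFace

lemma sum_comb (a : S.V →₀ ℝ) : ∑ k, S.comb a k = a.degree := by
  simp only [Finsupp.linearCombination_apply, Finsupp.sum, Finset.sum_apply, Pi.smul_apply,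
    smul_eq_mul, Finsupp.degree_apply]
  rw [sum_comm]
  exact sum_congr rfl fun v _ ↦ by rw [← mul_sum, (S.pos_mem v).2, mul_one]

lemma pos_mem_coordSubspace_of_comb_mem {a : S.V →₀ ℝ} (ha : 0 ≤ a)
    (haJ : S.comb a ∈ coordSubspace J) {v : S.V} (hv : a v ≠ 0) :
    S.pos v ∈ coordSubspace J := by
  rw [Pi.mem_spanSubset_iff] at haJ ⊢
  intro k hk
  have hsum : ∑ u ∈ a.support, a u * S.pos u k = 0 := by
    simpa [Finsupp.linearCombination_apply, Finsupp.sum] using haJ k hk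
  have hterm := (sum_eq_zero_iff_of_nonneg fun u _ ↦ mul_nonneg (ha u) ((S.pos_mem u).1 k)).1 hsum
  exact (mul_eq_zero.1 (hterm v (Finsupp.mem_support_iff.2 hv))).resolve_left hv

lemma IsFace.linearIndepOn_pos (hF : S.IsFace F) : LinearIndepOn ℝ S.pos (F : Set S.V) := by
  obtain ⟨s, hs, hFs⟩ := hF
  have hindep : LinearIndepOn ℝ S.pos (s : Set S.V) :=
    linearIndependent_of_affineIndependent_of_map_eq_one (S.indep s hs)
      (∑ k, LinearMap.proj k) fun v ↦ by simpa using (S.pos_mem v).2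
  exact hindep.mono (coe_subset.2 hFs)

lemma IsFace.injOn_comb (hF : S.IsFace F) :
    Set.InjOn S.comb (Finsupp.supported ℝ ℝ (F : Set S.V)) := fun _ ha _ hb hab ↦
  linearIndepOn_iffₛ.1 hF.linearIndepOn_pos _ ha _ hb hab

lemma IsFace.finrank_span (hF : S.IsFace F) :
    finrank ℝ (Submodule.span ℝ (S.pos '' F)) = #F := by
  have h := finrank_span_eq_card (b := fun v : F ↦ S.pos v) hF.linearIndepOn_pos
  rwa [Fintype.card_coe, Set.range_comp' S.pos, Subtype.range_coe_subtype] at h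

lemma IsFaceOn.span_le (hF : S.IsFaceOn J F) :
    Submodule.span ℝ (S.pos '' F) ≤ coordSubspace J :=
  Submodule.span_le.2 (Set.image_subset_iff.2 hF.pos_mem)

lemma finrank_coordSubspace : finrank ℝ (coordSubspace J) = #J := by
  rw [Pi.dim_spanSubset, Set.ncard_coe_finset]

lemma span_pos_image_of_mem_cells {σ : Finset S.V} (hσ : σ ∈ S.cells J) :
    Submodule.span ℝ (S.pos '' σ) = coordSubspace J := by
  obtain ⟨hface, hcard⟩ := mem_cells.1 hσ
  refine Submodule.eq_of_le_of_finrank_eq hface.span_le ?_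
  rw [hface.isFace.finrank_span, finrank_coordSubspace, hcard]

lemma cells_univ : S.cells univ = S.simplices := by
  ext s
  rw [mem_cells, card_univ, Fintype.card_fin]
  refine ⟨fun ⟨⟨⟨t, ht, hst⟩, _⟩, hs⟩ ↦ ?_,
    fun hs ↦ ⟨⟨⟨s, hs, subset_rfl⟩, ?_⟩, S.card_simplex s hs⟩⟩
  · rwa [eq_of_subset_of_card_le hst (S.card_simplex t ht ▸ hs.ge)]
  · simp [Pi.mem_spanSubset_iff]

lemma exists_simplex_comb_eq {x : Fin (n + 1) → ℝ} (hx : 0 ≤ x) :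
    ∃ s ∈ S.simplices, ∃ a ∈ Finsupp.supported ℝ ℝ (s : Set S.V), 0 ≤ a ∧ S.comb a = x := by
  have exists_of_mem : ∀ y ∈ stdSimplex ℝ (Fin (n + 1)), ∃ s ∈ S.simplices,
      ∃ a ∈ Finsupp.supported ℝ ℝ (s : Set S.V), 0 ≤ a ∧ S.comb a = y := by
    intro y hy
    rw [← S.covers] at hy
    obtain ⟨s, hs, hys⟩ := Set.mem_iUnion₂.1 hy
    exact ⟨s, hs, exists_nonneg_linearCombination_eq_of_mem_convexHull hys⟩
  rcases (sum_nonneg fun k _ ↦ hx k).eq_or_lt with hsum | hsum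
  · obtain ⟨s, hs, -⟩ := exists_of_mem _ (single_mem_stdSimplex ℝ (0 : Fin (n + 1)))
    refine ⟨s, hs, 0, zero_mem _, le_rfl, ?_⟩
    ext k
    simpa using ((sum_eq_zero_iff_of_nonneg fun k _ ↦ hx k).1 hsum.symm k (mem_univ k)).symm
  · obtain ⟨s, hs, a, has, ha, hax⟩ := exists_of_mem ((∑ k, x k)⁻¹ • x)
      ⟨fun k ↦ mul_nonneg (inv_nonneg.2 hsum.le) (hx k), by
        simp [← mul_sum, hsum.ne']⟩
    refine ⟨s, hs, (∑ k, x k) • a, Submodule.smul_mem _ _ has, smul_nonneg hsum.le ha, ?_⟩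
    rw [map_smul, hax, smul_inv_smul₀ hsum.ne']

lemma cells_empty : S.cells ∅ = {∅} := by
  obtain ⟨s, hs, -⟩ := S.exists_simplex_comb_eq le_rfl
  ext F
  rw [mem_cells, card_empty, card_eq_zero, mem_singleton, and_iff_right_iff_imp]
  rintro rfl
  exact ⟨⟨s, hs, empty_subset s⟩, by simp⟩

lemma eq_of_comb_eq (hF : S.IsFace F) (hG : S.IsFace G) {a b : S.V →₀ ℝ}
    (haF : a ∈ Finsupp.supported ℝ ℝ (F : Set S.V)) (hbG : b ∈ Finsupp.supported ℝ ℝ (G : Set S.V))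
    (ha : 0 ≤ a) (hb : 0 ≤ b) (hab : S.comb a = S.comb b) : a = b := by
  obtain ⟨s, hs, hFs⟩ := hF
  obtain ⟨t, ht, hGt⟩ := hG
  replace haF := Finsupp.supported_mono (coe_subset.2 hFs) haF
  replace hbG := Finsupp.supported_mono (coe_subset.2 hGt) hbG
  have hsinj := IsFace.injOn_comb ⟨s, hs, subset_rfl⟩
  have htinj := IsFace.injOn_comb ⟨t, ht, subset_rfl⟩
  have hdeg : a.degree = b.degree := by rw [← sum_comb, ← sum_comb, hab]
  rcases eq_or_ne a 0 with rfl | hne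
  · exact htinj (zero_mem _) hbG hab
  · have hpos : 0 < a.degree := Finset.sum_pos
      (fun v hv ↦ (ha v).lt_of_ne' (Finsupp.mem_support_iff.1 hv))
      (Finsupp.support_nonempty_iff.2 hne)
    obtain ⟨c, hc, -, hcx⟩ := exists_nonneg_linearCombination_eq_of_mem_convexHull <|
      (S.inter s hs t ht).subset ⟨inv_degree_smul_linearCombination_mem_convexHull haF ha hpos, by
        rw [hab, hdeg]
        exact inv_degree_smul_linearCombination_mem_convexHull hbG hb (hdeg ▸ hpos)⟩
    have hcomb : S.comb a = S.comb (a.degree • c) := by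
      rw [map_smul, hcx, smul_inv_smul₀ hpos.ne']
    rw [@coe_inter _ S.decV] at hc
    have has := hsinj haF (Submodule.smul_mem _ _ (Finsupp.supported_mono Set.inter_subset_left hc))
      hcomb
    have hbt := htinj hbG
      (Submodule.smul_mem _ _ (Finsupp.supported_mono Set.inter_subset_right hc)) (hab ▸ hcomb)
    rw [has, ← hbt]

lemma exists_simplex_comb_eq_of_eventually_nonneg {c w : Fin (n + 1) → ℝ}
    (h : ∀ᶠ ε : ℝ in 𝓝[>] 0, 0 ≤ c + ε • w) :
    ∃ s ∈ S.simplices, ∃ γ ∈ Finsupp.supported ℝ ℝ (s : Set S.V),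
      ∃ ω ∈ Finsupp.supported ℝ ℝ (s : Set S.V),
        S.comb γ = c ∧ S.comb ω = w ∧ 0 ≤ γ ∧ ∃ ε : ℝ, 0 < ε ∧ 0 ≤ γ + ε • ω := by
  have hfreq : ∃ᶠ ε : ℝ in 𝓝[>] 0, ∃ s ∈ S.simplices,
      ∃ a ∈ Finsupp.supported ℝ ℝ (s : Set S.V), 0 ≤ a ∧ S.comb a = c + ε • w :=
    (h.mono fun ε hε ↦ exists_simplex_comb_eq hε).frequently
  obtain ⟨s, hs, hfreq⟩ := (frequently_exists_finset S.simplices).1 hfreq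
  have hspan : ∀ x, ∃ a ∈ Finsupp.supported ℝ ℝ (s : Set S.V), S.comb a = x := fun x ↦ by
    rw [← Finsupp.mem_span_image_iff_linearCombination,
      span_pos_image_of_mem_cells (J := univ) (cells_univ ▸ hs)]
    simp [Pi.mem_spanSubset_iff]
  obtain ⟨γ, hγs, hγ⟩ := hspan c
  obtain ⟨ω, hωs, hω⟩ := hspan w
  have hpos : ∃ᶠ ε : ℝ in 𝓝[>] 0, 0 < ε ∧ 0 ≤ γ + ε • ω := by
    refine (hfreq.and_eventually self_mem_nhdsWithin).mono ?_
    rintro ε ⟨⟨a, has, ha, hcomb⟩, hε⟩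
    refine ⟨hε, ?_⟩
    rwa [← IsFace.injOn_comb ⟨s, hs, subset_rfl⟩ has
      (add_mem hγs (Submodule.smul_mem _ ε hωs)) (by rw [hcomb, map_add, map_smul, hγ, hω])]
  refine ⟨s, hs, γ, hγs, ω, hωs, hγ, hω, fun v ↦ ?_, hpos.exists⟩
  have hlim : Tendsto (fun ε : ℝ ↦ γ v + ε * ω v) (𝓝[>] 0) (𝓝 (γ v)) :=
    tendsto_nhdsWithin_of_tendsto_nhds (Continuous.tendsto' (by fun_prop) _ _ (by simp))
  exact isClosed_Ici.mem_of_frequently_of_tendsto (hpos.mono fun ε hε ↦ hε.2 v) hlim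

lemma exists_isFaceOn_comb_eq_of_eventually_nonneg {c w : Fin (n + 1) → ℝ}
    (hc : c ∈ coordSubspace J) (hw : w ∈ coordSubspace J)
    (h : ∀ᶠ ε : ℝ in 𝓝[>] 0, 0 ≤ c + ε • w) :
    ∃ F, S.IsFaceOn J F ∧ ∃ γ ∈ Finsupp.supported ℝ ℝ (F : Set S.V),
      ∃ ω ∈ Finsupp.supported ℝ ℝ (F : Set S.V),
        S.comb γ = c ∧ S.comb ω = w ∧ 0 ≤ γ ∧ ∀ v, γ v = 0 → 0 ≤ ω v := by
  obtain ⟨s, hs, γ, hγs, ω, hωs, rfl, rfl, hγ, ε, hε, hγω⟩ :=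
    exists_simplex_comb_eq_of_eventually_nonneg (S := S) h
  have add_apply : ∀ v, γ v = 0 → (γ + ε • ω) v = ε * ω v := fun v hv ↦ by simp [hv]
  have mem_of_ne : ∀ v, γ v ≠ 0 ∨ ω v ≠ 0 → S.pos v ∈ coordSubspace J := by
    intro v hv
    by_cases hγv : γ v = 0
    · refine pos_mem_coordSubspace_of_comb_mem (a := γ + ε • ω) hγω ?_ ?_
      · rw [map_add, map_smul]
        exact add_mem hc (Submodule.smul_mem _ ε hw)
      · rw [add_apply v hγv]
        exact mul_ne_zero hε.ne' (hv.resolve_left (not_not.2 hγv))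
    · exact pos_mem_coordSubspace_of_comb_mem hγ hc hγv
  refine ⟨{v ∈ s | S.pos v ∈ coordSubspace J},
    ⟨⟨s, hs, filter_subset _ _⟩, fun v hv ↦ (mem_filter.1 hv).2⟩,
    γ, fun v hv ↦ ?_, ω, fun v hv ↦ ?_, rfl, rfl, hγ, fun v hv ↦ ?_⟩
  · exact mem_coe.2 (mem_filter.2 ⟨hγs hv, mem_of_ne v (Or.inl (Finsupp.mem_support_iff.1 hv))⟩)
  · exact mem_coe.2 (mem_filter.2 ⟨hωs hv, mem_of_ne v (Or.inr (Finsupp.mem_support_iff.1 hv))⟩)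
  · exact nonneg_of_mul_nonneg_right (add_apply v hv ▸ hγω v) hε

variable {φ : (Fin (n + 1) → ℝ) →ₗ[ℝ] ℝ}

lemma exists_generic_direction (S : SimplicialSubdivision n)
    (hφ : ¬coordSubspace J ≤ LinearMap.ker φ) :
    ∃ w ∈ coordSubspace J, 0 < φ w ∧
      ∀ F, S.IsFaceOn J F → w ∈ Submodule.span ℝ (S.pos '' F) → F ∈ S.cells J := by
  let I : Finset (Finset S.V) :=
    {F ∈ S.simplices.biUnion powerset | S.IsFaceOn J F ∧ F ∉ S.cells J}
  have not_le : ∀ F ∈ I, ¬coordSubspace J ≤ Submodule.span ℝ (S.pos '' F) := by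
    intro F hF hle
    obtain ⟨-, hface, hcells⟩ := mem_filter.1 hF
    refine hcells (mem_cells.2 ⟨hface, ?_⟩)
    rw [← hface.isFace.finrank_span, ← finrank_coordSubspace, hface.span_le.antisymm hle]
  obtain ⟨w, hw, hwP⟩ := exists_mem_forall_notMem_of_not_le
    (P := insert (LinearMap.ker φ) (I.image fun F : Finset S.V ↦ Submodule.span ℝ (S.pos '' F)))
    (W := coordSubspace J) (by simpa [hφ] using not_le)
  have hφw : φ w ≠ 0 := hwP _ (mem_insert_self _ _)
  have generic : ∀ F, S.IsFaceOn J F → w ∈ Submodule.span ℝ (S.pos '' F) → F ∈ S.cells J := by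
    intro F hF hwF
    by_contra hcells
    have hFI : F ∈ I :=
      mem_filter.2 ⟨mem_biUnion.2 (by simpa [IsFace] using hF.isFace), hF, hcells⟩
    exact hwP _ (mem_insert_of_mem (mem_image_of_mem _ hFI)) hwF
  rcases hφw.lt_or_gt with hneg | hpos
  · exact ⟨-w, neg_mem hw, by simpa using hneg, fun F hF hwF ↦ generic F hF (by simpa using hwF)⟩
  · exact ⟨w, hw, hpos, generic⟩

/-- By `hside`, a short step from the sum of the vertices of `F` into the positive side of `φ` does
not leave the cone over the big simplex. If the direction of the step is generic, it enters the
interior of a cell. -/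
lemma exists_mem_cells_pos (hF : S.IsFaceOn J F) (hφF : ∀ v ∈ F, φ (S.pos v) = 0)
    (hφ : ¬coordSubspace J ≤ LinearMap.ker φ)
    (hside : ∀ w ∈ coordSubspace J, 0 < φ w → ∀ k, (∀ v ∈ F, S.pos v k = 0) → 0 ≤ w k) :
    ∃ σ ∈ S.cells J, F ⊆ σ ∧ ∃ u ∈ σ, 0 < φ (S.pos u) := by
  obtain ⟨w, hw, hφw, generic⟩ := S.exists_generic_direction hφ
  have hc0 : ∀ k, (∑ v ∈ F, S.pos v) k = 0 → ∀ v ∈ F, S.pos v k = 0 := fun k ↦ by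
    rw [Finset.sum_apply]
    exact (sum_eq_zero_iff_of_nonneg fun v _ ↦ (S.pos_mem v).1 k).1
  obtain ⟨G, hG, γ, hγG, ω, hωG, hγ, hω, hγ0, hωγ⟩ :=
    exists_isFaceOn_comb_eq_of_eventually_nonneg (S := S) (sum_mem hF.pos_mem) hw <|
      eventually_nonneg_add_smul (sum_nonneg fun v _ ↦ (S.pos_mem v).1)
        fun k hk ↦ hside w hw hφw k (hc0 k hk)
  have hγF : γ = ∑ v ∈ F, Finsupp.single v 1 := by
    refine eq_of_comb_eq hG.isFace hF.isFace hγG ?_ hγ0 ?_ ?_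
    · exact sum_mem fun v hv ↦ Finsupp.single_mem_supported ℝ 1 hv
    · exact sum_nonneg fun v _ ↦ Finsupp.single_nonneg.2 zero_le_one
    · simp [hγ]
  have hγ_apply : ∀ v, γ v = if v ∈ F then 1 else 0 := fun v ↦ by
    simp [hγF, Finsupp.single_apply]
  refine ⟨G, generic G hG ?_, fun v hv ↦ hγG ?_, ?_⟩
  · exact (Finsupp.mem_span_image_iff_linearCombination ℝ).2 ⟨ω, hωG, hω⟩
  · simp [hγ_apply, hv]
  · have hsum : 0 < ∑ v ∈ ω.support, ω v * φ (S.pos v) := by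
      rw [← hω, Finsupp.apply_linearCombination] at hφw
      simpa [Finsupp.linearCombination_apply, Finsupp.sum] using hφw
    obtain ⟨u, hu, hupos⟩ : ∃ u ∈ ω.support, 0 < ω u * φ (S.pos u) := by
      by_contra! hle
      exact hsum.not_ge (sum_nonpos hle)
    have huF : u ∉ F := fun huF ↦ by simp [hφF u huF] at hupos
    exact ⟨u, hωG hu, pos_of_mul_pos_right hupos (hωγ u (by simp [hγ_apply, huF]))⟩

/-- Splitting the element of the span into its positive and negative parts turns the hypothesis into
two nonnegative representations, on `σ` and on `τ`, of a single point of the cone. -/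
lemma eq_of_smul_pos_sub_smul_pos_mem_span {σ τ : Finset S.V} (hσ : S.IsFace σ) (hτ : S.IsFace τ)
    (hFσ : F ⊆ σ) (hFτ : F ⊆ τ) {u v : S.V} (hu : u ∈ σ) (hv : v ∈ τ) (huF : u ∉ F) {r t : ℝ}
    (hr : 0 < r) (ht : 0 ≤ t)
    (hspan : r • S.pos u - t • S.pos v ∈ Submodule.span ℝ (S.pos '' F)) : u = v := by
  obtain ⟨f, hfF, hf⟩ := (Finsupp.mem_span_image_iff_linearCombination ℝ).1 hspan
  rw [Finsupp.mem_supported'] at hfF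
  have heq : r • Finsupp.single u 1 + f⁻ = t • Finsupp.single v 1 + f⁺ := by
    refine eq_of_comb_eq hσ hτ (add_mem ?_ ?_) (add_mem ?_ ?_) (add_nonneg ?_ (negPart_nonneg f))
      (add_nonneg ?_ (posPart_nonneg f)) ?_
    · exact Submodule.smul_mem _ _ (Finsupp.single_mem_supported ℝ 1 hu)
    · exact (Finsupp.mem_supported' ℝ _).2 fun w hw ↦ by
        simp [negPart, hfF w fun hwF ↦ hw (hFσ hwF)]
    · exact Submodule.smul_mem _ _ (Finsupp.single_mem_supported ℝ 1 hv)
    · exact (Finsupp.mem_supported' ℝ _).2 fun w hw ↦ by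
        simp [posPart, hfF w fun hwF ↦ hw (hFτ hwF)]
    · exact smul_nonneg hr.le (Finsupp.single_nonneg.2 zero_le_one)
    · exact smul_nonneg ht (Finsupp.single_nonneg.2 zero_le_one)
    · rw [← posPart_sub_negPart f, map_sub] at hf
      simpa [sub_eq_sub_iff_add_eq_add, add_comm] using hf.symm
  by_contra hne
  simpa [negPart, posPart, hfF u huF, Ne.symm hne, hr.ne'] using DFunLike.congr_fun heq u

lemma not_coordSubspace_le_ker (hF : S.IsFace F) (hcard : #F + 1 = #J)
    (hφ : coordSubspace J ⊓ LinearMap.ker φ = Submodule.span ℝ (S.pos '' F)) :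
    ¬coordSubspace J ≤ LinearMap.ker φ := fun hle ↦ by
  have := hF.finrank_span
  rw [← hφ, inf_of_le_left hle, finrank_coordSubspace] at this
  lia

lemma exists_map_pos_ne_zero_of_mem_cells {σ : Finset S.V} (hσ : σ ∈ S.cells J)
    (hφ : ¬coordSubspace J ≤ LinearMap.ker φ) : ∃ u ∈ σ, φ (S.pos u) ≠ 0 := by
  by_contra! h
  rw [← span_pos_image_of_mem_cells hσ, Submodule.span_le, Set.image_subset_iff] at hφ
  exact hφ h

lemma exists_pos_apply_ne_zero_of_mem_cells {σ : Finset S.V} (hσ : σ ∈ S.cells J) {k : Fin (n + 1)}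
    (hk : k ∈ J) : ∃ v ∈ σ, S.pos v k ≠ 0 := by
  refine exists_map_pos_ne_zero_of_mem_cells (φ := LinearMap.proj k) hσ fun hle ↦ ?_
  have hmem : Pi.single k 1 ∈ coordSubspace J := Pi.mem_spanSubset_iff.2 fun i hi ↦
    Pi.single_eq_of_ne (by rintro rfl; exact hi hk) 1
  simpa using hle hmem

lemma map_pos_eq_zero (hφ : coordSubspace J ⊓ LinearMap.ker φ = Submodule.span ℝ (S.pos '' F))
    {v : S.V} (hv : v ∈ F) : φ (S.pos v) = 0 :=
  (hφ.ge (Submodule.subset_span (Set.mem_image_of_mem _ hv))).2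

lemma insert_eq_of_mem_cells (hcard : #F + 1 = #J) {σ : Finset S.V} (hσ : σ ∈ S.cells J)
    (hFσ : F ⊆ σ) {u : S.V} (hu : u ∈ σ) (huF : u ∉ F) : insert u F = σ := by
  refine eq_of_subset_of_card_le (insert_subset hu hFσ) ?_
  rw [card_insert_of_notMem huF, (mem_cells.1 hσ).2, hcard]

lemma existsUnique_mem_cells_pos (hF : S.IsFaceOn J F) (hcard : #F + 1 = #J)
    (hφ : coordSubspace J ⊓ LinearMap.ker φ = Submodule.span ℝ (S.pos '' F))
    (hside : ∀ w ∈ coordSubspace J, 0 < φ w → ∀ k, (∀ v ∈ F, S.pos v k = 0) → 0 ≤ w k) :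
    ∃! σ, σ ∈ S.cells J ∧ F ⊆ σ ∧ ∃ u ∈ σ, 0 < φ (S.pos u) := by
  have notMem : ∀ {u}, 0 < φ (S.pos u) → u ∉ F := fun hu huF ↦ hu.ne' (map_pos_eq_zero hφ huF)
  obtain ⟨σ, hσ, hFσ, u, hu, hφu⟩ := exists_mem_cells_pos hF (fun v ↦ map_pos_eq_zero hφ)
    (not_coordSubspace_le_ker hF.isFace hcard hφ) hside
  refine ⟨σ, ⟨hσ, hFσ, u, hu, hφu⟩, fun τ ⟨hτ, hFτ, v, hv, hφv⟩ ↦ ?_⟩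
  have hspan : φ (S.pos v) • S.pos u - φ (S.pos u) • S.pos v ∈ Submodule.span ℝ (S.pos '' F) := by
    rw [← hφ]
    exact ⟨sub_mem (Submodule.smul_mem _ _ ((mem_cells.1 hσ).1.pos_mem u hu))
      (Submodule.smul_mem _ _ ((mem_cells.1 hτ).1.pos_mem v hv)), by simp [mul_comm]⟩
  obtain rfl : u = v := eq_of_smul_pos_sub_smul_pos_mem_span (mem_cells.1 hσ).1.isFace
    (mem_cells.1 hτ).1.isFace hFσ hFτ hu hv (notMem hφu) hφv hφu.le hspan
  rw [← insert_eq_of_mem_cells hcard hσ hFσ hu (notMem hφu),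
    insert_eq_of_mem_cells hcard hτ hFτ hv (notMem hφu)]

lemma card_filter_subset_cells_eq_two (hF : S.IsFaceOn J F) (hcard : #F + 1 = #J)
    (hinterior : ∀ k ∈ J, ∃ v ∈ F, S.pos v k ≠ 0) : #{σ ∈ S.cells J | F ⊆ σ} = 2 := by
  obtain ⟨φ, hφ⟩ := exists_inf_ker_eq hF.span_le
    (by rw [finrank_coordSubspace, hF.isFace.finrank_span, hcard])
  have hside : ∀ w ∈ coordSubspace J, ∀ k, (∀ v ∈ F, S.pos v k = 0) → 0 ≤ w k := by
    intro w hw k hk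
    refine (Pi.mem_spanSubset_iff.1 hw k fun hkJ ↦ ?_).ge
    obtain ⟨v, hv, hvk⟩ := hinterior k hkJ
    exact hvk (hk v hv)
  obtain ⟨σ, ⟨hσ, hFσ, u, hu, hφu⟩, hσ_unique⟩ :=
    existsUnique_mem_cells_pos hF hcard hφ fun w hw _ ↦ hside w hw
  obtain ⟨τ, ⟨hτ, hFτ, v, hv, hφv⟩, hτ_unique⟩ :=
    existsUnique_mem_cells_pos (φ := -φ) hF hcard (by rwa [LinearMap.ker_neg])
      fun w hw _ ↦ hside w hw
  simp only [LinearMap.neg_apply, Left.neg_pos_iff] at hφv hτ_unique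
  have hne : σ ≠ τ := by
    rintro rfl
    rw [← insert_eq_of_mem_cells hcard hσ hFσ hu fun h ↦ hφu.ne' (map_pos_eq_zero hφ h),
      mem_insert] at hv
    rcases hv with rfl | hvF
    · exact hφu.not_gt hφv
    · exact hφv.ne (map_pos_eq_zero hφ hvF)
  have heq : {ρ ∈ S.cells J | F ⊆ ρ} = {σ, τ} := by
    refine Subset.antisymm (fun ρ hρ ↦ ?_) (by simp [insert_subset_iff, hσ, hFσ, hτ, hFτ])
    obtain ⟨hρ, hFρ⟩ := mem_filter.1 hρ
    obtain ⟨w, hw, hφw⟩ := exists_map_pos_ne_zero_of_mem_cells hρ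
      (not_coordSubspace_le_ker hF.isFace hcard hφ)
    rw [mem_insert, mem_singleton]
    exact hφw.lt_or_gt.symm.imp (fun h ↦ hσ_unique ρ ⟨hρ, hFρ, w, hw, h⟩)
      fun h ↦ hτ_unique ρ ⟨hρ, hFρ, w, hw, h⟩
  rw [heq, card_pair hne]

variable {j : Fin (n + 1)}

lemma IsFaceOn.mono {J' : Finset (Fin (n + 1))} (hF : S.IsFaceOn J F) (hJ : J ⊆ J') :
    S.IsFaceOn J' F :=
  ⟨hF.isFace, fun v hv ↦ Pi.mem_spanSubset_iff.2 fun k hk ↦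
    Pi.mem_spanSubset_iff.1 (hF.pos_mem v hv) k fun hkJ ↦ hk (hJ hkJ)⟩

lemma IsFaceOn.subset (hG : S.IsFaceOn J G) (hFG : F ⊆ G) : S.IsFaceOn J F :=
  have ⟨s, hs, hGs⟩ := hG.isFace
  ⟨⟨s, hs, hFG.trans hGs⟩, fun v hv ↦ hG.pos_mem v (hFG hv)⟩

lemma coordSubspace_insert_inf_ker_proj (hj : j ∉ J) :
    coordSubspace (insert j J) ⊓ LinearMap.ker (LinearMap.proj j) = coordSubspace J := by
  ext x
  simp only [Submodule.mem_inf, Pi.mem_spanSubset_iff, coe_insert, Set.mem_insert_iff, mem_coe,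
    not_or, LinearMap.mem_ker, LinearMap.proj_apply]
  refine ⟨fun ⟨hx, hxj⟩ k hk ↦ ?_, fun hx ↦ ⟨fun k hk ↦ hx k hk.2, hx j hj⟩⟩
  rcases eq_or_ne k j with rfl | hkj
  · exact hxj
  · exact hx k ⟨hkj, hk⟩

lemma card_filter_subset_cells_insert_eq_one (hF : F ∈ S.cells J) (hj : j ∉ J) :
    #{σ ∈ S.cells (insert j J) | F ⊆ σ} = 1 := by
  obtain ⟨hface, hcard⟩ := mem_cells.1 hF
  have hspan : coordSubspace (insert j J) ⊓ LinearMap.ker (LinearMap.proj j) =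
      Submodule.span ℝ (S.pos '' F) := by
    rw [coordSubspace_insert_inf_ker_proj hj, span_pos_image_of_mem_cells hF]
  replace hface := hface.mono (subset_insert j J)
  replace hcard : #F + 1 = #(insert j J) := by rw [card_insert_of_notMem hj, hcard]
  have hside : ∀ w ∈ coordSubspace (insert j J), 0 < (LinearMap.proj j : _ →ₗ[ℝ] ℝ) w →
      ∀ k, (∀ v ∈ F, S.pos v k = 0) → 0 ≤ w k := by
    intro w hw hwj k hk
    rcases eq_or_ne k j with rfl | hkj
    · exact hwj.le
    · refine (Pi.mem_spanSubset_iff.1 hw k fun hkJ ↦ ?_).ge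
      obtain ⟨v, hv, hvk⟩ := exists_pos_apply_ne_zero_of_mem_cells hF
        ((mem_insert.1 hkJ).resolve_left hkj)
      exact hvk (hk v hv)
  obtain ⟨σ, ⟨hσ, hFσ, -⟩, hσ_unique⟩ := existsUnique_mem_cells_pos hface hcard hspan hside
  refine card_eq_one.2 ⟨σ, Subset.antisymm (fun τ hτ ↦ ?_) (by simp [hσ, hFσ])⟩
  obtain ⟨hτ, hFτ⟩ := mem_filter.1 hτ
  obtain ⟨u, hu, hju⟩ := exists_map_pos_ne_zero_of_mem_cells hτ
    (not_coordSubspace_le_ker hface.isFace hcard hspan)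
  exact mem_singleton.2 (hσ_unique τ ⟨hτ, hFτ, u, hu, ((S.pos_mem u).1 j).lt_of_ne' hju⟩)

lemma odd_card_filter_subset_cells_insert_iff (hj : j ∉ J) (hcard : #F = #J)
    (hF : ∀ k ∈ J, ∃ v ∈ F, S.pos v k ≠ 0) :
    Odd #{σ ∈ S.cells (insert j J) | F ⊆ σ} ↔ F ∈ S.cells J := by
  constructor
  · intro hodd
    obtain ⟨σ, hσ⟩ := card_pos.1 hodd.pos
    obtain ⟨hσ, hFσ⟩ := mem_filter.1 hσ
    have hface : S.IsFaceOn (insert j J) F := (mem_cells.1 hσ).1.subset hFσ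
    have hboundary : ∀ v ∈ F, S.pos v j = 0 := by
      by_contra! hFj
      rw [card_filter_subset_cells_eq_two hface (by rw [card_insert_of_notMem hj, hcard])
        ((forall_mem_insert _ _ _).2 ⟨hFj, hF⟩)] at hodd
      exact Nat.not_odd_iff_even.2 even_two hodd
    refine mem_cells.2 ⟨⟨hface.isFace, fun v hv ↦ ?_⟩, hcard⟩
    rw [← coordSubspace_insert_inf_ker_proj hj]
    exact ⟨hface.pos_mem v hv, hboundary v hv⟩
  · intro hFJ
    rw [card_filter_subset_cells_insert_eq_one hFJ hj]
    exact odd_one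

lemma odd_card_filter_image_eq {ℓ : S.V → Fin (n + 1)} (hℓ : ∀ v, S.pos v (ℓ v) ≠ 0)
    (J : Finset (Fin (n + 1))) : Odd #{σ ∈ S.cells J | σ.image ℓ = J} := by
  induction J using Finset.induction_on with
  | empty => simp [cells_empty, filter_singleton]
  | insert j J hj ih =>
    refine (odd_card_filter_image_eq_insert_iff hj (fun σ hσ ↦ ?_) (fun F hF ↦ (mem_cells.1 hF).2)
      (fun σ hσ ↦ image_subset_iff.2 fun v hv ↦ ?_) fun F hcard hF ↦
      odd_card_filter_subset_cells_insert_iff hj hcard fun k hk ↦ ?_).2 ih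
    · rw [(mem_cells.1 hσ).2, card_insert_of_notMem hj]
    · by_contra hℓv
      exact hℓ v (Pi.mem_spanSubset_iff.1 ((mem_cells.1 hσ).1.pos_mem v hv) _ hℓv)
    · obtain ⟨v, hv, rfl⟩ := mem_image.1 (hF ▸ hk)
      exact ⟨v, hv, hℓ v⟩

end SimplicialSubdivision

/-- Sperner's lemma in dimension `n`: for a Sperner labeling (each vertex gets a
label at which its barycentric coordinate is nonzero) the number of fully labeled
small simplices is odd; in particular at least one exists. -/
theorem sperner_lemma (n : ℕ) (S : SimplicialSubdivision n)
    (ℓ : S.V → Fin (n + 1)) (hℓ : ∀ v, S.pos v (ℓ v) ≠ 0) :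
    Odd ((S.simplices.filter (fun s => ∀ k : Fin (n + 1), ∃ v ∈ s, ℓ v = k)).card) ∧
    ∃ s ∈ S.simplices, ∀ k : Fin (n + 1), ∃ v ∈ s, ℓ v = k := by
  have hodd : Odd #{s ∈ S.simplices | ∀ k, ∃ v ∈ s, ℓ v = k} := by
    have h := S.odd_card_filter_image_eq hℓ univ
    simpa only [S.cells_univ, eq_univ_iff_forall, mem_image] using h
  obtain ⟨s, hs⟩ := card_pos.1 hodd.pos
  exact ⟨hodd, s, mem_filter.1 hs⟩
end
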